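/- arXiv:1508.04836 — 3 statements merged into one kernel-verified Lean document; each statement's English description precedes it below -/
import Mathlib

section
/- There exist absolute constants C1, C2 > 0 such that for every finite irreducible reversible Markov chain (Ω,P,π), every probability measure μ on Ω, every 0 < α ≤ 1/2 and every real t ≥ 1: d_L(φ_{α,C1}(t), μ) ≤ d_c(t/2, μ) + C2 · t^{−α}. Moreover the same inequality holds with the worst-case distances d_L(φ_{α,C1}(t)) and d_c(t/2) in place of the μ-versions. -/
open Matrix Filter Asymptotics

/-- `P` is a stochastic matrix. -/
def IsStochastic {Ω : Type*} [Fintype Ω] (P : Matrix Ω Ω ℝ) : Prop :=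
  (∀ x y, 0 ≤ P x y) ∧ ∀ x, ∑ y, P x y = 1

/-- `P` is irreducible. -/
def IsIrreducibleMatrix {Ω : Type*} [Fintype Ω] [DecidableEq Ω] (P : Matrix Ω Ω ℝ) : Prop :=
  ∀ x y, ∃ n : ℕ, 0 < (P ^ n) x y

/-- `μ` is a probability vector. -/
def IsProbVec {Ω : Type*} [Fintype Ω] (μ : Ω → ℝ) : Prop :=
  (∀ x, 0 ≤ μ x) ∧ ∑ x, μ x = 1

/-- The chain `(P, pi)` is reversible. -/
def IsReversible {Ω : Type*} [Fintype Ω] (P : Matrix Ω Ω ℝ) (pi : Ω → ℝ) : Prop :=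
  ∀ x y, pi x * P x y = pi y * P y x

/-- A finite irreducible Markov chain `P` with stationary distribution `pi`. -/
def IsMC {Ω : Type*} [Fintype Ω] [DecidableEq Ω] (P : Matrix Ω Ω ℝ) (pi : Ω → ℝ) : Prop :=
  IsStochastic P ∧ IsIrreducibleMatrix P ∧ IsProbVec pi ∧ pi ᵥ* P = pi

/-- A finite irreducible reversible Markov chain `P` with stationary distribution `pi`. -/
def IsRevMC {Ω : Type*} [Fintype Ω] [DecidableEq Ω] (P : Matrix Ω Ω ℝ) (pi : Ω → ℝ) : Prop :=
  IsMC P pi ∧ IsReversible P pi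

/-- Total-variation distance between two measures on a finite set. -/
noncomputable def tvDist {Ω : Type*} [Fintype Ω] (μ ν : Ω → ℝ) : ℝ :=
  (∑ x, |μ x - ν x|) / 2

/-- The lazy version `(I + P)/2` of `P`. -/
noncomputable def lazyM {Ω : Type*} [Fintype Ω] [DecidableEq Ω] (P : Matrix Ω Ω ℝ) :
    Matrix Ω Ω ℝ :=
  (2 : ℝ)⁻¹ • (1 + P)

/-- `d_c(t, μ)`: TV distance from stationarity of the continuous-time chain at time `t`,
started from `μ`. -/
noncomputable def contDist {Ω : Type*} [Fintype Ω] [DecidableEq Ω] (P : Matrix Ω Ω ℝ) (pi : Ω → ℝ)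
    (t : ℝ) (μ : Ω → ℝ) : ℝ :=
  tvDist (fun y => ∑' k : ℕ, Real.exp (-t) * t ^ k / (Nat.factorial k) * (μ ᵥ* (P ^ k)) y) pi

/-- `d_L(t, μ)`: TV distance from stationarity of the lazy chain at (discrete) time `t`,
started from `μ`. -/
noncomputable def lazyDist {Ω : Type*} [Fintype Ω] [DecidableEq Ω] (P : Matrix Ω Ω ℝ)
    (pi : Ω → ℝ) (t : ℝ) (μ : Ω → ℝ) : ℝ :=
  tvDist (μ ᵥ* (lazyM P ^ ⌊t⌋₊)) pi

/-- `d_ave(t, μ)`: TV distance from stationarity of the averaged chain at (discrete) time `t`,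
started from `μ`. -/
noncomputable def aveDist {Ω : Type*} [Fintype Ω] [DecidableEq Ω] (P : Matrix Ω Ω ℝ) (pi : Ω → ℝ)
    (t : ℝ) (μ : Ω → ℝ) : ℝ :=
  tvDist (fun y => ((μ ᵥ* (P ^ ⌊t⌋₊)) y + (μ ᵥ* (P ^ (⌊t⌋₊ + 1))) y) / 2) pi

/-- The point mass at `x`. -/
noncomputable def deltaMass {Ω : Type*} [DecidableEq Ω] (x : Ω) : Ω → ℝ :=
  fun y => if y = x then 1 else 0

/-- Worst-case continuous-time distance `d_c(t)`. -/
noncomputable def contDistMax {Ω : Type*} [Fintype Ω] [DecidableEq Ω] (P : Matrix Ω Ω ℝ)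
    (pi : Ω → ℝ) (t : ℝ) : ℝ :=
  ⨆ x : Ω, contDist P pi t (deltaMass x)

/-- Worst-case lazy distance `d_L(t)`. -/
noncomputable def lazyDistMax {Ω : Type*} [Fintype Ω] [DecidableEq Ω] (P : Matrix Ω Ω ℝ)
    (pi : Ω → ℝ) (t : ℝ) : ℝ :=
  ⨆ x : Ω, lazyDist P pi t (deltaMass x)

/-- Worst-case averaged distance `d_ave(t)`. -/
noncomputable def aveDistMax {Ω : Type*} [Fintype Ω] [DecidableEq Ω] (P : Matrix Ω Ω ℝ)
    (pi : Ω → ℝ) (t : ℝ) : ℝ :=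
  ⨆ x : Ω, aveDist P pi t (deltaMass x)

/-- `φ_{α,C}(t) = t + ⌈C t^{(1+2α)/2} √(α log t)⌉`. -/
noncomputable def phiAC (α C t : ℝ) : ℝ :=
  t + ((⌈C * t ^ ((1 + 2 * α) / 2) * Real.sqrt (α * Real.log t)⌉ : ℤ) : ℝ)

/-- `ψ_{α,C}(x) = min (1, x + C |log(2x)|^{-α})`. -/
noncomputable def psiAC (α C x : ℝ) : ℝ :=
  min 1 (x + C * |Real.log (2 * x)| ^ (-α))

/-- `t_c(ε)`, the `ε`-mixing time of the continuous-time chain. -/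
noncomputable def contMix {Ω : Type*} [Fintype Ω] [DecidableEq Ω] (P : Matrix Ω Ω ℝ)
    (pi : Ω → ℝ) (ε : ℝ) : ℝ :=
  sInf {t : ℝ | 0 ≤ t ∧ contDistMax P pi t ≤ ε}

/-- `t_L(ε)`, the `ε`-mixing time of the lazy chain. -/
noncomputable def lazyMix {Ω : Type*} [Fintype Ω] [DecidableEq Ω] (P : Matrix Ω Ω ℝ)
    (pi : Ω → ℝ) (ε : ℝ) : ℕ :=
  sInf {t : ℕ | lazyDistMax P pi t ≤ ε}

/-- `t_ave(ε)`, the `ε`-mixing time of the averaged chain. -/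
noncomputable def aveMix {Ω : Type*} [Fintype Ω] [DecidableEq Ω] (P : Matrix Ω Ω ℝ)
    (pi : Ω → ℝ) (ε : ℝ) : ℕ :=
  sInf {t : ℕ | aveDistMax P pi t ≤ ε}


section Abstract
variable {V : Type*} [AddCommGroup V] [Module ℝ V]

structure GoodPair (B : V →ₗ[ℝ] V →ₗ[ℝ] ℝ) (Q D : V →ₗ[ℝ] V) : Prop where
  sym : ∀ x y, B x y = B y x
  pos : ∀ x, 0 ≤ B x x
  add : ∀ x, Q x + D x = x
  self : ∀ x y, B (Q x) y = B x (Q y)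
  cross : ∀ x, 0 ≤ B (Q x) (D x)

namespace GoodPair
variable {B : V →ₗ[ℝ] V →ₗ[ℝ] ℝ} {Q D : V →ₗ[ℝ] V}

lemma comm (h : GoodPair B Q D) (x : V) : D (Q x) = Q (D x) := by
  have h1 := h.add (Q x)
  have h2 : Q (Q x) + Q (D x) = Q x := by rw [← map_add, h.add]
  exact add_left_cancel (h1.trans h2.symm)

lemma norm_drop (h : GoodPair B Q D) (x : V) :
    B (D x) x ≤ B x x - B (Q x) (Q x) := by
  have e1 : B x x = B (Q x + D x) (Q x + D x) := by rw [h.add]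
  have e2 : B (D x) x = B (D x) (Q x + D x) := by rw [h.add]
  have := h.cross x
  have := h.sym (Q x) (D x)
  simp only [map_add, LinearMap.add_apply] at e1 e2
  linarith

lemma energy_nonneg (h : GoodPair B Q D) (x : V) : 0 ≤ B (D x) x := by
  have e2 : B (D x) x = B (D x) (Q x + D x) := by rw [h.add]
  have := h.cross x
  have := h.sym (Q x) (D x)
  have := h.pos (D x)
  simp only [map_add] at e2
  linarith

lemma q_nonneg (h : GoodPair B Q D) (x : V) : 0 ≤ B (Q x) x := by
  have e2 : B (Q x) x = B (Q x) (Q x + D x) := by rw [h.add]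
  have := h.cross x
  have := h.pos (Q x)
  simp only [map_add] at e2
  linarith

lemma energy_drop (h : GoodPair B Q D) (x : V) :
    B (D x) (D x) ≤ B (D x) x - B (D (Q x)) (Q x) := by
  have e1 : B (D x) x = B (D (Q x) + D (D x)) (Q x + D x) := by rw [← map_add, h.add]
  have e3 : B (D x) (D x) = B (Q (D x) + D (D x)) (D x) := by rw [h.add]
  have e4 : B (D (D x)) (Q x) = B (Q (D x)) (D x) := by
    rw [← h.self, ← h.comm (D x)]
    have a1 : B (D (Q (D x))) x = B (Q (D x)) (D x) := by
      have b1 : B (Q (D x)) x = B (Q (Q (D x)) + D (Q (D x))) x := by rw [h.add]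
      have b2 : B (Q (D x)) x = B (Q (D x)) (Q x + D x) := by rw [h.add]
      have b3 := h.self (Q (D x)) x
      simp only [map_add, LinearMap.add_apply] at b1 b2
      linarith
    exact a1
  have e5 : B (D (Q x)) (D x) = B (Q (D x)) (D x) := by rw [h.comm]
  have := h.q_nonneg (D x)
  simp only [map_add, LinearMap.add_apply] at e1 e3
  linarith

lemma iter (h : GoodPair B Q D) (x : V) (n : ℕ) :
    n * B (D ((Q ^ n) x)) ((Q ^ n) x) ≤ B x x - B ((Q ^ n) x) ((Q ^ n) x) := by
  induction n with
  | zero => simp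
  | succ n ih =>
    have h1 := h.norm_drop ((Q ^ n) x)
    have h2 := h.energy_drop ((Q ^ n) x)
    have h3 := h.pos (D ((Q ^ n) x))
    rw [pow_succ', Module.End.mul_apply]
    push_cast
    have hn : (0 : ℝ) ≤ n := Nat.cast_nonneg n
    nlinarith [mul_le_mul_of_nonneg_left (h3.trans h2) hn]

lemma iter2 (h : GoodPair B Q D) (x : V) (n : ℕ) :
    n * B (D ((Q ^ n) x)) (D ((Q ^ n) x)) ≤ B (D x) x - B (D ((Q ^ n) x)) ((Q ^ n) x) := by
  induction n with
  | zero => simp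
  | succ n ih =>
    have h1 := h.energy_drop ((Q ^ n) x)
    have h2 := h.norm_drop (D ((Q ^ n) x))
    have h3 := h.energy_nonneg (D ((Q ^ n) x))
    rw [pow_succ', Module.End.mul_apply]
    rw [← h.comm] at h2
    push_cast
    have hn : (0 : ℝ) ≤ n := Nat.cast_nonneg n
    nlinarith [mul_le_mul_of_nonneg_left (h3.trans h2) hn]

lemma mono (h : GoodPair B Q D) (x : V) (i j : ℕ) :
    B (D ((Q ^ (i + j)) x)) (D ((Q ^ (i + j)) x)) ≤ B (D ((Q ^ i) x)) (D ((Q ^ i) x)) := by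
  induction j with
  | zero => simp
  | succ j ih =>
    refine le_trans ?_ ih
    rw [← add_assoc, pow_succ', Module.End.mul_apply, h.comm]
    have h2 := h.norm_drop (D ((Q ^ (i + j)) x))
    have h3 := h.energy_nonneg (D ((Q ^ (i + j)) x))
    linarith

/-- Main spectral-type estimate. -/
lemma main (h : GoodPair B Q D) (x : V) (n j : ℕ) (hj : 2 * n ≤ j) :
    (n : ℝ) ^ 2 * B (D ((Q ^ j) x)) (D ((Q ^ j) x)) ≤ B x x := by
  obtain ⟨k, rfl⟩ := Nat.exists_eq_add_of_le hj
  have hn : (0 : ℝ) ≤ n := Nat.cast_nonneg n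
  have h0 := mul_le_mul_of_nonneg_left (h.mono x (2 * n) k) (sq_nonneg (n : ℝ))
  have h1 := h.iter x n
  have h2 := h.iter2 ((Q ^ n) x) n
  have hqq : (Q ^ n) ((Q ^ n) x) = (Q ^ (2 * n)) x := by
    rw [two_mul, pow_add, Module.End.mul_apply]
  rw [hqq] at h2
  have h3 := h.energy_nonneg ((Q ^ (2 * n)) x)
  have h4 := h.pos ((Q ^ n) x)
  nlinarith [mul_le_mul_of_nonneg_left h2 hn, mul_nonneg hn h3]

end GoodPair
end Abstract

section Chain
set_option linter.unusedSectionVars false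
variable {Ω : Type*} [Fintype Ω] [DecidableEq Ω]

noncomputable def wform (pi : Ω → ℝ) : (Ω → ℝ) →ₗ[ℝ] (Ω → ℝ) →ₗ[ℝ] ℝ :=
  LinearMap.mk₂ ℝ (fun f g => ∑ x, pi x * (f x * g x))
    (by intro f f' g; simp only [Pi.add_apply, ← Finset.sum_add_distrib]
        exact Finset.sum_congr rfl fun x _ => by ring)
    (by intro c f g; simp only [Pi.smul_apply, smul_eq_mul, Finset.mul_sum]
        exact Finset.sum_congr rfl fun x _ => by ring)
    (by intro f g g'; simp only [Pi.add_apply, ← Finset.sum_add_distrib]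
        exact Finset.sum_congr rfl fun x _ => by ring)
    (by intro c f g; simp only [Pi.smul_apply, smul_eq_mul, Finset.mul_sum]
        exact Finset.sum_congr rfl fun x _ => by ring)

lemma wform_apply (pi f g : Ω → ℝ) : wform pi f g = ∑ x, pi x * (f x * g x) := rfl

lemma wform_self {P : Matrix Ω Ω ℝ} {pi : Ω → ℝ} (hr : IsReversible P pi) (f g : Ω → ℝ) :
    wform pi (P *ᵥ f) g = wform pi f (P *ᵥ g) := by
  simp only [wform_apply, mulVec, dotProduct, Finset.mul_sum, Finset.sum_mul]
  rw [Finset.sum_comm]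
  refine Finset.sum_congr rfl fun x _ => Finset.sum_congr rfl fun y _ => ?_
  have := hr x y
  calc pi y * (P y x * f x * g y) = (pi y * P y x) * (f x * g y) := by ring
    _ = _ := by rw [← this]; ring

lemma wform_contr {P : Matrix Ω Ω ℝ} {pi : Ω → ℝ} (h : IsRevMC P pi) (f : Ω → ℝ) :
    wform pi (P *ᵥ f) (P *ᵥ f) ≤ wform pi f f := by
  obtain ⟨⟨⟨hP0, hP1⟩, _, ⟨hpi0, _⟩, hst⟩, _⟩ := h
  simp only [wform_apply]
  have key : ∀ x, (P *ᵥ f) x * (P *ᵥ f) x ≤ ∑ y, P x y * (f y * f y) := by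
    intro x
    have h2 : 0 ≤ ∑ y, P x y * (f y - (P *ᵥ f) x) ^ 2 :=
      Finset.sum_nonneg fun y _ => mul_nonneg (hP0 x y) (sq_nonneg _)
    have h3 : ∑ y, P x y * (f y - (P *ᵥ f) x) ^ 2 = ∑ y, P x y * (f y * f y)
        - 2 * (P *ᵥ f) x * (∑ y, P x y * f y) + (P *ᵥ f) x ^ 2 * ∑ y, P x y := by
      rw [Finset.mul_sum, Finset.mul_sum, ← Finset.sum_sub_distrib, ← Finset.sum_add_distrib]
      exact Finset.sum_congr rfl fun y _ => by ring
    have h4 : ∑ y, P x y * f y = (P *ᵥ f) x := rfl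
    rw [hP1, h4] at h3
    nlinarith
  calc ∑ x, pi x * ((P *ᵥ f) x * (P *ᵥ f) x) ≤ ∑ x, pi x * ∑ y, P x y * (f y * f y) :=
        Finset.sum_le_sum fun x _ => mul_le_mul_of_nonneg_left (key x) (hpi0 x)
    _ = ∑ y, (pi ᵥ* P) y * (f y * f y) := by
        simp only [vecMul, dotProduct, Finset.mul_sum, Finset.sum_mul]
        rw [Finset.sum_comm]
        exact Finset.sum_congr rfl fun x _ => Finset.sum_congr rfl fun y _ => by ring
    _ = _ := by rw [hst]

lemma lazy_mulVec (P : Matrix Ω Ω ℝ) (f : Ω → ℝ) :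
    lazyM P *ᵥ f = (2 : ℝ)⁻¹ • (f + P *ᵥ f) := by
  simp [lazyM, smul_mulVec, add_mulVec]

lemma lazy_good {P : Matrix Ω Ω ℝ} {pi : Ω → ℝ} (h : IsRevMC P pi) :
    GoodPair (wform pi) (lazyM P).mulVecLin (1 - lazyM P).mulVecLin where
  sym x y := by
    simp only [wform_apply]; exact Finset.sum_congr rfl fun x _ => by ring
  pos x := by
    simp only [wform_apply]
    exact Finset.sum_nonneg fun y _ => mul_nonneg (h.1.2.2.1.1 y) (mul_self_nonneg _)
  add x := by simp [sub_mulVec]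
  self x y := by
    simp only [Matrix.mulVecLin_apply, lazy_mulVec, map_smul, map_add, LinearMap.smul_apply,
      LinearMap.add_apply, wform_self h.2]
  cross x := by
    simp only [Matrix.mulVecLin_apply, sub_mulVec, one_mulVec, lazy_mulVec]
    have h1 := wform_contr h x
    have h2 : wform pi x (P *ᵥ x) = wform pi (P *ᵥ x) x := (wform_self h.2 x x).symm
    simp only [map_smul, map_add, map_sub, LinearMap.smul_apply, LinearMap.add_apply, smul_eq_mul]
    linarith

lemma lazy_stoch {P : Matrix Ω Ω ℝ} (h : IsStochastic P) : IsStochastic (lazyM P) := by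
  constructor
  · intro x y
    have := h.1 x y
    by_cases hxy : x = y
    · subst hxy; simp [lazyM]; positivity
    · simp [lazyM, Matrix.one_apply, hxy, this]
  · intro x
    simp only [lazyM, Matrix.smul_apply, Matrix.add_apply, smul_eq_mul, ← Finset.mul_sum,
      Finset.sum_add_distrib, h.2, Matrix.one_apply]
    simp; norm_num

lemma stoch_pow {P : Matrix Ω Ω ℝ} (h : IsStochastic P) (k : ℕ) : IsStochastic (P ^ k) := by
  induction k with
  | zero =>
    constructor
    · intro x y; by_cases hxy : x = y <;> simp [Matrix.one_apply, hxy]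
    · intro x; simp [Matrix.one_apply]
  | succ k ih =>
    rw [pow_succ]
    constructor
    · intro x y; rw [mul_apply]
      exact Finset.sum_nonneg fun z _ => mul_nonneg (ih.1 x z) (h.1 z y)
    · intro x
      simp only [mul_apply]
      rw [Finset.sum_comm]
      simp only [← Finset.mul_sum, h.2, mul_one, ih.2]

lemma prob_vecMul {P : Matrix Ω Ω ℝ} (h : IsStochastic P) {μ : Ω → ℝ} (hμ : IsProbVec μ) :
    IsProbVec (μ ᵥ* P) := by
  constructor
  · intro x; simp only [vecMul, dotProduct]
    exact Finset.sum_nonneg fun z _ => mul_nonneg (hμ.1 z) (h.1 z x)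
  · simp only [vecMul, dotProduct]
    rw [Finset.sum_comm]
    simp only [← Finset.mul_sum, h.2, mul_one, hμ.2]

lemma lazy_stat {P : Matrix Ω Ω ℝ} {pi : Ω → ℝ} (h : pi ᵥ* P = pi) (k : ℕ) :
    pi ᵥ* (lazyM P ^ k) = pi := by
  induction k with
  | zero => simp
  | succ k ih =>
    rw [pow_succ, ← vecMul_vecMul, ih]
    ext x
    simp [lazyM, vecMul_smul, vecMul_add, h]; ring

lemma tv_nonneg (μ ν : Ω → ℝ) : 0 ≤ tvDist μ ν :=
  div_nonneg (Finset.sum_nonneg fun _ _ => abs_nonneg _) (by norm_num)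

lemma tv_le_one {μ ν : Ω → ℝ} (hμ : IsProbVec μ) (hν : IsProbVec ν) : tvDist μ ν ≤ 1 := by
  unfold tvDist
  have : ∑ x, |μ x - ν x| ≤ ∑ x, (μ x + ν x) := Finset.sum_le_sum fun x _ => by
    have := hμ.1 x; have := hν.1 x
    rw [abs_le]; constructor <;> linarith
  rw [Finset.sum_add_distrib, hμ.2, hν.2] at this
  linarith

lemma tv_test {μ ν : Ω → ℝ} (hs : ∑ x, μ x = ∑ x, ν x) (w : Ω → ℝ) (hw0 : ∀ x, 0 ≤ w x)
    (hw1 : ∀ x, w x ≤ 1) : ν ⬝ᵥ w - μ ⬝ᵥ w ≤ tvDist μ ν := by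
  have h : ∀ x, ν x * w x - μ x * w x ≤ (|μ x - ν x| - (μ x - ν x)) / 2 := by
    intro x
    rcases abs_cases (μ x - ν x) with ⟨h1, h2⟩ | ⟨h1, h2⟩ <;> rw [h1] <;>
      nlinarith [hw0 x, hw1 x]
  have := Finset.sum_le_sum fun x (_ : x ∈ Finset.univ) => h x
  rw [← Finset.sum_div, Finset.sum_sub_distrib, Finset.sum_sub_distrib, Finset.sum_sub_distrib,
    hs] at this
  simp only [dotProduct, tvDist]
  linarith

lemma tv_attain {μ ν : Ω → ℝ} (hs : ∑ x, μ x = ∑ x, ν x) :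
    ∃ w : Ω → ℝ, (∀ x, 0 ≤ w x) ∧ (∀ x, w x ≤ 1) ∧ tvDist μ ν = ν ⬝ᵥ w - μ ⬝ᵥ w := by
  refine ⟨fun x => if μ x < ν x then 1 else 0, ?_, ?_, ?_⟩
  · intro x; dsimp only; split_ifs <;> norm_num
  · intro x; dsimp only; split_ifs <;> norm_num
  have h : ∀ x, ν x * (if μ x < ν x then 1 else 0) - μ x * (if μ x < ν x then 1 else 0)
      = (|μ x - ν x| - (μ x - ν x)) / 2 := by
    intro x
    split_ifs with hx
    · rw [abs_of_neg (by linarith)]; ring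
    · rw [abs_of_nonneg (by linarith)]; ring
  simp only [dotProduct, ← Finset.sum_sub_distrib, h, tvDist]
  rw [← Finset.sum_div, Finset.sum_sub_distrib, Finset.sum_sub_distrib, hs]
  ring

/-- stochastic matrices preserve [0,1]-valued functions -/
lemma stoch_unit {P : Matrix Ω Ω ℝ} (h : IsStochastic P) {f : Ω → ℝ} (h0 : ∀ x, 0 ≤ f x)
    (h1 : ∀ x, f x ≤ 1) (x : Ω) : 0 ≤ (P *ᵥ f) x ∧ (P *ᵥ f) x ≤ 1 := by
  simp only [mulVec, dotProduct]
  refine ⟨Finset.sum_nonneg fun y _ => mul_nonneg (h.1 x y) (h0 y), ?_⟩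
  rw [← h.2 x]
  exact Finset.sum_le_sum fun y _ => mul_le_of_le_one_right (h.1 x y) (h1 y)

lemma l1_bound {P : Matrix Ω Ω ℝ} {pi : Ω → ℝ} (h : IsRevMC P pi) {f : Ω → ℝ}
    (h0 : ∀ x, 0 ≤ f x) (h1 : ∀ x, f x ≤ 1) (n j : ℕ) (hj : 2 * n ≤ j) :
    n * (∑ x, pi x * |(lazyM P ^ j *ᵥ f - lazyM P ^ (j + 1) *ᵥ f) x|) ≤ 1 := by
  have hm := (lazy_good h).main f n j hj
  have hp : ((lazyM P).mulVecLin ^ j) f = lazyM P ^ j *ᵥ f := by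
    clear hm hj
    induction j with
    | zero => simp
    | succ j ih => rw [pow_succ', Module.End.mul_apply, ih, pow_succ', ← mulVec_mulVec]; rfl
  rw [hp, Matrix.mulVecLin_apply, sub_mulVec, one_mulVec, mulVec_mulVec, ← pow_succ'] at hm
  set g := lazyM P ^ j *ᵥ f - lazyM P ^ (j + 1) *ᵥ f
  obtain ⟨hpi0, hpi1⟩ := h.1.2.2.1
  have hf : wform pi f f ≤ 1 := by
    rw [wform_apply, ← hpi1]
    refine Finset.sum_le_sum fun x _ => mul_le_of_le_one_right (hpi0 x) ?_
    nlinarith [h0 x, h1 x]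
  have hcs : (∑ x, pi x * |g x|) ^ 2 ≤ wform pi g g := by
    obtain ⟨S, hS⟩ : ∃ S, S = ∑ x, pi x * |g x| := ⟨_, rfl⟩
    rw [← hS]
    have h2 : 0 ≤ ∑ x, pi x * (|g x| - S) ^ 2 :=
      Finset.sum_nonneg fun y _ => mul_nonneg (hpi0 y) (sq_nonneg _)
    have h3 : ∑ x, pi x * (|g x| - S) ^ 2 = ∑ x, pi x * (g x * g x)
        - 2 * S * (∑ x, pi x * |g x|) + S ^ 2 * ∑ x, pi x := by
      rw [Finset.mul_sum, Finset.mul_sum, ← Finset.sum_sub_distrib, ← Finset.sum_add_distrib]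
      exact Finset.sum_congr rfl fun y _ => by rw [← abs_mul_abs_self (g y)]; ring
    rw [hpi1, ← hS] at h3
    rw [wform_apply]
    nlinarith
  have : (n * (∑ x, pi x * |g x|)) ^ 2 ≤ 1 := by
    rw [mul_pow]
    exact (mul_le_mul_of_nonneg_left hcs (sq_nonneg _)).trans (hm.trans hf)
  nlinarith

lemma hs_congr {X : Type*} [AddCommMonoid X] [TopologicalSpace X] {f g : ℕ → X} {a : X}
    (h : HasSum f a) (hfg : ∀ k, g k = f k) : HasSum g a := by
  rwa [show g = f from funext hfg]

section ExpSum
attribute [local instance] Matrix.linftyOpNormedRing Matrix.linftyOpNormedAlgebra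

lemma hasSum_matrix_exp (A : Matrix Ω Ω ℝ) (c : ℝ) :
    HasSum (fun k : ℕ => (c ^ k / (Nat.factorial k)) • A ^ k) (NormedSpace.exp (c • A)) := by
  have h := NormedSpace.exp_series_hasSum_exp' (𝕂 := ℝ) (c • A)
  refine hs_congr h fun k => ?_
  rw [smul_pow, smul_smul]; congr 1; field_simp
end ExpSum

lemma hasSum_vec (A : Matrix Ω Ω ℝ) (c d : ℝ) (μ : Ω → ℝ) (y : Ω) :
    HasSum (fun k : ℕ => d * c ^ k / (Nat.factorial k) * (μ ᵥ* (A ^ k)) y)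
      (d * (μ ᵥ* NormedSpace.exp (c • A)) y) := by
  have h := hasSum_matrix_exp A c
  have hc : Continuous fun M : Matrix Ω Ω ℝ => d * (μ ᵥ* M) y := by
    refine continuous_const.mul ?_
    simp only [vecMul, dotProduct]
    fun_prop
  let F : Matrix Ω Ω ℝ →+ ℝ :=
    { toFun := fun M => d * (μ ᵥ* M) y
      map_zero' := by simp
      map_add' := fun M N => by simp [vecMul_add, mul_add] }
  have := h.map F hc
  refine hs_congr this fun k => ?_
  simp [F, vecMul_smul]; ring

lemma exp_lazy (P : Matrix Ω Ω ℝ) (t : ℝ) :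
    NormedSpace.exp (t • lazyM P) = Real.exp (t / 2) • NormedSpace.exp ((t / 2) • P) := by
  have h1 : t • lazyM P = (t / 2) • (1 : Matrix Ω Ω ℝ) + (t / 2) • P := by
    rw [lazyM, smul_smul, smul_add]; rfl
  have h2 : (t / 2) • (1 : Matrix Ω Ω ℝ) = diagonal (fun _ => t / 2) := by
    rw [smul_one_eq_diagonal]
  rw [h1, Matrix.exp_add_of_commute _ _ ((Commute.one_left _).smul_left _ |>.smul_right _), h2,
    Matrix.exp_diagonal]
  have h3 : NormedSpace.exp (fun _ : Ω => t / 2) = fun _ => Real.exp (t / 2) := by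
    ext x; rw [Pi.coe_exp, Real.exp_eq_exp_ℝ]
  rw [h3, ← smul_one_eq_diagonal, smul_mul_assoc, one_mul]

/-- law of the continuous-time chain -/
noncomputable def contLaw (P : Matrix Ω Ω ℝ) (t : ℝ) (μ : Ω → ℝ) : Ω → ℝ :=
  fun y => ∑' k : ℕ, Real.exp (-t) * t ^ k / (Nat.factorial k) * (μ ᵥ* (P ^ k)) y

lemma contLaw_hasSum (P : Matrix Ω Ω ℝ) (t : ℝ) (μ : Ω → ℝ) (y : Ω) :
    HasSum (fun k : ℕ => Real.exp (-t) * t ^ k / (Nat.factorial k) * (μ ᵥ* (lazyM P ^ k)) y)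
      (contLaw P (t / 2) μ y) := by
  have h1 := hasSum_vec (lazyM P) t (Real.exp (-t)) μ y
  have h2 := hasSum_vec P (t / 2) (Real.exp (-(t / 2))) μ y
  rw [exp_lazy, vecMul_smul, Pi.smul_apply, smul_eq_mul, ← mul_assoc, ← Real.exp_add,
    show -t + t / 2 = -(t / 2) by ring, ← h2.tsum_eq] at h1
  exact h1

lemma poisson_mgf (t θ : ℝ) :
    HasSum (fun k : ℕ => Real.exp (-t) * t ^ k / (Nat.factorial k) * Real.exp (θ * k))
      (Real.exp (-t + t * Real.exp θ)) := by
  have h := (NormedSpace.expSeries_div_hasSum_exp (𝔸 := ℝ) (t * Real.exp θ)).mul_left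
    (Real.exp (-t))
  rw [← Real.exp_eq_exp_ℝ, ← Real.exp_add] at h
  refine hs_congr h fun k => ?_
  rw [mul_pow, ← Real.exp_nat_mul, mul_comm θ]; ring

lemma contLaw_sum {P : Matrix Ω Ω ℝ} (hP : IsStochastic P) (t : ℝ) {μ : Ω → ℝ}
    (hμ : IsProbVec μ) : ∑ y, contLaw P (t / 2) μ y = 1 := by
  have h := hasSum_sum fun y (_ : y ∈ Finset.univ) => contLaw_hasSum P t μ y
  have h2 := poisson_mgf t 0
  simp only [← Finset.mul_sum, (prob_vecMul (stoch_pow (lazy_stoch hP) _) hμ).2] at h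
  simp at h2
  simp only [mul_one] at h
  exact h.unique h2

/-- Chernoff bound with windows. -/
lemma tail_bound {t θ : ℝ} (ht : 0 ≤ t) (h : |θ| ≤ 1) (K : ℝ) :
    ∑' k : ℕ, Real.exp (-t) * t ^ k / (Nat.factorial k) * Real.exp (θ * (k - t) - K)
      ≤ Real.exp (θ ^ 2 * t - K) ∧
    Summable (fun k : ℕ => Real.exp (-t) * t ^ k / (Nat.factorial k) *
      Real.exp (θ * (k - t) - K)) := by
  have h1 := (poisson_mgf t θ).mul_right (Real.exp (-(θ * t) - K))
  have h2 : HasSum (fun k : ℕ => Real.exp (-t) * t ^ k / (Nat.factorial k) *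
      Real.exp (θ * (k - t) - K)) (Real.exp (-t + t * Real.exp θ) * Real.exp (-(θ * t) - K)) := by
    refine hs_congr h1 fun k => ?_
    rw [mul_assoc, ← Real.exp_add]; congr 2; ring
  refine ⟨?_, h2.summable⟩
  rw [h2.tsum_eq, ← Real.exp_add, Real.exp_le_exp]
  have h3 := (abs_le.1 (Real.abs_exp_sub_one_sub_id_le h)).2
  nlinarith [mul_le_mul_of_nonneg_left h3 ht]

/-- Core comparison. -/
lemma core {P : Matrix Ω Ω ℝ} {pi : Ω → ℝ} (h : IsRevMC P pi) {μ : Ω → ℝ} (hμ : IsProbVec μ)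
    {t θ K : ℝ} (ht : 0 ≤ t) (hθ0 : 0 ≤ θ) (hθ1 : θ ≤ 1) (hK : 0 ≤ K) (m n : ℕ) (hn : 0 < n)
    (hm : 2 * n + ⌊t + K⌋₊ ≤ m) :
    tvDist (μ ᵥ* (lazyM P ^ m)) pi ≤ tvDist (contLaw P (t / 2) μ) pi
      + 2 * Real.exp (θ ^ 2 * t - θ * K) + 2 * K / n := by
  set Q := lazyM P with hQ
  have hst := h.1.1
  have hpi := h.1.2.2.1
  have hQs : ∀ k, IsStochastic (Q ^ k) := stoch_pow (lazy_stoch hst)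
  have hμQ : ∀ k, IsProbVec (μ ᵥ* (Q ^ k)) := fun k => prob_vecMul (hQs k) hμ
  obtain ⟨f, hf0, hf1, hf⟩ := tv_attain (μ := μ ᵥ* (Q ^ m)) (ν := pi)
    ((hμQ m).2.trans hpi.2.symm)
  rw [hf]
  set b := ⌊t + K⌋₊ with hb
  obtain ⟨s, hs⟩ : ∃ s, m = s + b := ⟨m - b, by omega⟩
  have hsn : 2 * n ≤ s := by omega
  set N := ⌊2 * K⌋₊ with hN
  set g : ℕ → Ω → ℝ := fun i => Q ^ (s + i) *ᵥ f - Q ^ (s + i + 1) *ᵥ f with hg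
  set M : Ω → ℝ := fun x => ∑ i ∈ Finset.range N, |g i x| with hM
  set w : Ω → ℝ := fun x => max ((Q ^ s *ᵥ f) x - M x) 0 with hw
  have hM0 : ∀ x, 0 ≤ M x := fun x => Finset.sum_nonneg fun _ _ => abs_nonneg _
  have hw0 : ∀ x, 0 ≤ w x := fun x => le_max_right _ _
  have hw1 : ∀ x, w x ≤ 1 := fun x => max_le
    (by linarith [hM0 x, (stoch_unit (hQs s) hf0 hf1 x).2]) zero_le_one
  -- pointwise lower bound
  have hpt : ∀ i ≤ N, ∀ x, w x ≤ (Q ^ (s + i) *ᵥ f) x := by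
    intro i hi x
    refine max_le ?_ (stoch_unit (hQs _) hf0 hf1 x).1
    have h1 : (Q ^ s *ᵥ f) x - (Q ^ (s + i) *ᵥ f) x = ∑ j ∈ Finset.range i, g j x := by
      have := Finset.sum_range_sub' (fun j => (Q ^ (s + j) *ᵥ f) x) i
      rw [← add_zero s]
      exact this.symm
    have h2 : ∑ j ∈ Finset.range i, g j x ≤ M x :=
      (Finset.sum_le_sum fun j _ => le_abs_self _).trans
        (Finset.sum_le_sum_of_subset_of_nonneg (Finset.range_mono hi) fun _ _ _ => abs_nonneg _)
    linarith
  -- the stationary integral of M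
  have hMint : ∑ x, pi x * M x ≤ 2 * K / n := by
    have hn' : (0 : ℝ) < n := Nat.cast_pos.2 hn
    have h1 : ∀ i ∈ Finset.range N, ∑ x, pi x * |g i x| ≤ 1 / n := by
      intro i _
      rw [le_div_iff₀ hn', mul_comm]
      exact l1_bound h hf0 hf1 n (s + i) (by omega)
    have h2 : ∑ x, pi x * M x = ∑ i ∈ Finset.range N, ∑ x, pi x * |g i x| := by
      simp only [hM, Finset.mul_sum]
      rw [Finset.sum_comm]
    rw [h2]
    refine (Finset.sum_le_sum h1).trans ?_
    rw [Finset.sum_const, Finset.card_range, nsmul_eq_mul, mul_one_div]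
    gcongr
    exact Nat.floor_le (by linarith)
  have hpw : pi ⬝ᵥ f - 2 * K / n ≤ pi ⬝ᵥ w := by
    have h1 : pi ⬝ᵥ f = pi ⬝ᵥ (Q ^ s *ᵥ f) := by
      rw [dotProduct_mulVec, lazy_stat h.1.2.2.2]
    have h2 : pi ⬝ᵥ (Q ^ s *ᵥ f) - ∑ x, pi x * M x ≤ pi ⬝ᵥ w := by
      simp only [dotProduct, ← Finset.sum_sub_distrib, ← mul_sub]
      exact Finset.sum_le_sum fun x _ => mul_le_mul_of_nonneg_left (le_max_left _ _) (hpi.1 x)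
    linarith
  -- comparison for every k
  set I := (μ ᵥ* (Q ^ m)) ⬝ᵥ f with hI
  have hk : ∀ k : ℕ, (μ ᵥ* (Q ^ k)) ⬝ᵥ w ≤ I + (Real.exp (θ * (k - t) - θ * K)
      + Real.exp (-θ * (k - t) - θ * K)) := by
    intro k
    by_cases hkw : |(k : ℝ) - t| ≤ K
    · rw [abs_le] at hkw
      have hkb : k ≤ b := Nat.le_floor (by linarith)
      have hbk : b - k ≤ N := by
        refine Nat.le_floor ?_
        rw [Nat.cast_sub hkb]
        have := Nat.floor_le (show 0 ≤ t + K by linarith)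
        linarith
      have h1 : I = (μ ᵥ* (Q ^ k)) ⬝ᵥ (Q ^ (s + (b - k)) *ᵥ f) := by
        rw [dotProduct_mulVec, vecMul_vecMul, ← pow_add, hI]
        congr 4; omega
      have h2 : (μ ᵥ* (Q ^ k)) ⬝ᵥ w ≤ I := by
        rw [h1]
        exact Finset.sum_le_sum fun x _ =>
          mul_le_mul_of_nonneg_left (hpt _ hbk x) ((hμQ k).1 x)
      have := Real.exp_pos (θ * (k - t) - θ * K)
      have := Real.exp_pos (-θ * (k - t) - θ * K)
      linarith
    · have hI0 : 0 ≤ I := Finset.sum_nonneg fun x _ => mul_nonneg ((hμQ m).1 x) (hf0 x)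
      have h1 : (μ ᵥ* (Q ^ k)) ⬝ᵥ w ≤ 1 := by
        rw [← (hμQ k).2]
        exact Finset.sum_le_sum fun x _ => mul_le_of_le_one_right ((hμQ k).1 x) (hw1 x)
      have e1 := Real.exp_pos (θ * (k - t) - θ * K)
      have e2 := Real.exp_pos (-θ * (k - t) - θ * K)
      rw [not_le, lt_abs] at hkw
      rcases hkw with hkw | hkw
      · have : 1 ≤ Real.exp (θ * (k - t) - θ * K) := Real.one_le_exp (by nlinarith)
        linarith
      · have : 1 ≤ Real.exp (-θ * (k - t) - θ * K) := Real.one_le_exp (by nlinarith)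
        linarith
  -- average over Poisson
  have hT1 := tail_bound ht (abs_le.2 ⟨by linarith, hθ1⟩) (θ * K)
  have hT2 := tail_bound (θ := -θ) ht (abs_le.2 ⟨by linarith, by linarith⟩) (θ * K)
  have hS1 : HasSum (fun k : ℕ => Real.exp (-t) * t ^ k / (Nat.factorial k) *
      ((μ ᵥ* (Q ^ k)) ⬝ᵥ w)) (contLaw P (t / 2) μ ⬝ᵥ w) := by
    have := hasSum_sum fun y (_ : y ∈ Finset.univ) => (contLaw_hasSum P t μ y).mul_right (w y)
    simpa only [dotProduct, Finset.mul_sum, mul_assoc] using this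
  have hp1 : HasSum (fun k : ℕ => Real.exp (-t) * t ^ k / (Nat.factorial k)) 1 := by
    simpa using poisson_mgf t 0
  have hS2 := (hp1.mul_right I).add (hT1.2.hasSum.add hT2.2.hasSum)
  have hav := hasSum_le (fun k => by
    have := mul_le_mul_of_nonneg_left (hk k)
      (show 0 ≤ Real.exp (-t) * t ^ k / (Nat.factorial k) by positivity)
    rw [mul_add, mul_add] at this
    exact this) hS1 hS2
  have htv := tv_test (μ := contLaw P (t / 2) μ) (ν := pi)
    ((contLaw_sum hst t hμ).trans hpi.2.symm) w hw0 hw1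
  have := hT1.1
  have := hT2.1
  rw [neg_sq] at this
  linarith

end Chain

lemma single {Ω : Type*} [Fintype Ω] [DecidableEq Ω]
    {P : Matrix Ω Ω ℝ} {pi : Ω → ℝ} (h : IsRevMC P pi) {α t : ℝ} (hα : 0 < α)
    (hα2 : α ≤ 1 / 2) (ht : 1 ≤ t) {μ : Ω → ℝ} (hμ : IsProbVec μ) :
    lazyDist P pi (phiAC α 16 t) μ ≤ contDist P pi (t / 2) μ + 3 * t ^ (-α) := by
  have ht0 : 0 < t := by linarith
  set L := α * Real.log t with hL
  have hδ : t ^ (-α) = Real.exp (-L) := by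
    rw [Real.rpow_def_of_pos ht0]; congr 1; rw [hL]; ring
  rw [hδ]
  by_cases hL1 : L ≤ 1
  · have h1 : lazyDist P pi (phiAC α 16 t) μ ≤ 1 :=
      tv_le_one (prob_vecMul (stoch_pow (lazy_stoch h.1.1) _) hμ) h.1.2.2.1
    have h2 : 0 ≤ contDist P pi (t / 2) μ := tv_nonneg _ _
    have h3 : Real.exp (-1) ≤ Real.exp (-L) := Real.exp_le_exp.2 (by linarith)
    have h4 : 1 ≤ 3 * Real.exp (-1) := by
      have h5 := Real.exp_one_lt_d9
      have h6 : Real.exp 1 * Real.exp (-1) = 1 := by rw [← Real.exp_add]; simp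
      nlinarith [Real.exp_pos (-1)]
    linarith
  push Not at hL1
  have hlog : Real.log t ≤ t := (Real.log_le_sub_one_of_pos ht0).trans (by linarith)
  have hlog0 : 0 ≤ Real.log t := Real.log_nonneg ht
  have hLt : L ≤ t := by rw [hL]; nlinarith
  set R := Real.sqrt (t * L) with hR
  have hRR : R * R = t * L := Real.mul_self_sqrt (by positivity)
  have hR1 : 1 ≤ R := by rw [hR]; exact Real.one_le_sqrt.2 (by nlinarith)
  have hRt : R ≤ t := by
    rw [hR]; exact Real.sqrt_le_iff.2 ⟨ht0.le, by nlinarith⟩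
  have hE : 1 ≤ Real.exp L := Real.one_le_exp (by linarith)
  have hX : (16 : ℝ) * t ^ ((1 + 2 * α) / 2) * Real.sqrt L = 16 * (R * Real.exp L) := by
    rw [show (1 + 2 * α) / 2 = 1 / 2 + α by ring, Real.rpow_add ht0, ← Real.sqrt_eq_rpow,
      Real.rpow_def_of_pos ht0 α, hR, Real.sqrt_mul ht0.le, hL, mul_comm (Real.log t)]
    ring
  have hphi : t + 16 * (R * Real.exp L) ≤ phiAC α 16 t := by
    unfold phiAC
    rw [← hL, hX]
    have := Int.le_ceil (16 * (R * Real.exp L))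
    linarith
  set m := ⌊phiAC α 16 t⌋₊ with hm
  have hm1 : t + 16 * (R * Real.exp L) - 1 < m := by
    have := Nat.lt_floor_add_one (phiAC α 16 t)
    linarith
  set n := ⌈4 * (R * Real.exp L)⌉₊ with hn
  have hRE : R ≤ R * Real.exp L := by nlinarith
  have hn1 : 4 * (R * Real.exp L) ≤ n := Nat.le_ceil _
  have hn2 : (n : ℝ) < 4 * (R * Real.exp L) + 1 := Nat.ceil_lt_add_one (by positivity)
  have hn0 : 0 < n := by
    rw [← Nat.cast_pos (α := ℝ)]; linarith
  have hc := core h hμ (t := t) (θ := R / t) (K := 2 * R) ht0.le (by positivity)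
    ((div_le_one ht0).2 hRt) (by positivity) m n hn0 (by
      have := Nat.floor_le (show 0 ≤ t + 2 * R by positivity)
      have h2 : ((2 * n + ⌊t + 2 * R⌋₊ : ℕ) : ℝ) ≤ m := by
        push_cast
        linarith
      exact_mod_cast h2)
  have hexp : (R / t) ^ 2 * t - R / t * (2 * R) = -L := by
    field_simp
    nlinarith
  rw [hexp] at hc
  have hlast : 2 * (2 * R) / n ≤ Real.exp (-L) := by
    rw [div_le_iff₀ (Nat.cast_pos.2 hn0)]
    have h6 : Real.exp (-L) * Real.exp L = 1 := by rw [← Real.exp_add]; simp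
    have := mul_le_mul_of_nonneg_left hn1 (Real.exp_pos (-L)).le
    calc 2 * (2 * R) = Real.exp (-L) * Real.exp L * (4 * R) := by rw [h6]; ring
      _ ≤ _ := by linarith
  have e1 : lazyDist P pi (phiAC α 16 t) μ = tvDist (μ ᵥ* (lazyM P ^ m)) pi := rfl
  have e2 : contDist P pi (t / 2) μ = tvDist (contLaw P (t / 2) μ) pi := rfl
  rw [e1, e2]
  linarith

lemma delta_prob {Ω : Type*} [Fintype Ω] [DecidableEq Ω] (x : Ω) : IsProbVec (deltaMass x) := by
  constructor
  · intro y; unfold deltaMass; split_ifs <;> norm_num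
  · simp [deltaMass]

/-- **Theorem 1 (eq. (1)) of Hermon–Peres.**
There are absolute constants `C₁, C₂ > 0` such that for every finite irreducible reversible
Markov chain, every initial distribution `μ`, every `0 < α ≤ 1/2` and every `t ≥ 1`,
`d_L(φ_{α,C₁}(t), μ) ≤ d_c(t/2, μ) + C₂ t^{-α}`, and the same holds for the worst-case
distances. -/
theorem lazy_dist_le_cont_dist :
    ∃ C₁ C₂ : ℝ, 0 < C₁ ∧ 0 < C₂ ∧
      ∀ (Ω : Type) [Fintype Ω] [DecidableEq Ω] [Nonempty Ω]
        (P : Matrix Ω Ω ℝ) (pi : Ω → ℝ), IsRevMC P pi →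
        ∀ α t : ℝ, 0 < α → α ≤ 1 / 2 → 1 ≤ t →
          (∀ μ : Ω → ℝ, IsProbVec μ →
            lazyDist P pi (phiAC α C₁ t) μ ≤ contDist P pi (t / 2) μ + C₂ * t ^ (-α)) ∧
          lazyDistMax P pi (phiAC α C₁ t) ≤ contDistMax P pi (t / 2) + C₂ * t ^ (-α) := by
  refine ⟨16, 3, by norm_num, by norm_num, ?_⟩
  intro Ω _ _ _ P pi h α t hα hα2 ht
  refine ⟨fun μ hμ => single h hα hα2 ht hμ, ciSup_le fun x => ?_⟩
  refine (single h hα hα2 ht (delta_prob x)).trans ?_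
  have := le_ciSup (f := fun x => contDist P pi (t / 2) (deltaMass x))
    (Set.finite_range _).bddAbove x
  unfold contDistMax
  linarith
end

section
/- There exist absolute constants C2, C3 > 0 such that for every finite irreducible reversible Markov chain (Ω,P,π), every probability measure μ on Ω, every 0 < α ≤ 1/2 and every real t ≥ 1: d_ave(φ_{α,C3}(t), μ) ≤ d_c(t, μ) + 2·C2 · t^{−α}. Moreover the same inequality holds with the worst-case distances d_ave(φ_{α,C3}(t)) and d_c(t) in place of the μ-versions. -/
open Matrix Filter Asymptotics

namespace AveAux

theorem seq_bound (a : ℕ → ℝ) (ha : ∀ k, 0 ≤ a k) (hmono : ∀ k, a (k+1) ≤ a k)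
    (hc : ∀ k, a (k+1) - 2 * a (k+2) + a (k+3) ≤ a k - 2 * a (k+1) + a (k+2))
    (n : ℕ) : (n:ℝ)^2 / 2 * (a n - 2 * a (n+1) + a (n+2)) ≤ a 0 := by
  have hanti : Antitone (fun k => a k - 2 * a (k+1) + a (k+2)) :=
    antitone_nat_of_succ_le hc
  have hb : ∀ j m : ℕ, (j:ℝ) * (a (m+j) - 2 * a (m+j+1) + a (m+j+2)) ≤ a m - a (m+1) := by
    intro j
    induction j with
    | zero => intro m; have := hmono m; simp; linarith
    | succ j ih =>
      intro m
      have h1 := ih (m+1)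
      have h2 := hanti (show m ≤ m + (j+1) by omega)
      simp only at h2
      rw [show m + 1 + j = m + (j+1) by ring] at h1
      rw [show m + 1 + 1 = m + 2 by ring] at h1
      push_cast
      linarith
  have hA : ∀ j m : ℕ, (j:ℝ)^2/2 * (a (m+j) - 2 * a (m+j+1) + a (m+j+2)) ≤ a m := by
    intro j
    induction j with
    | zero => intro m; have := ha m; simp; linarith
    | succ j ih =>
      intro m
      have h1 := ih (m+1)
      have h2 := hb (j+1) m
      rw [show m + 1 + j = m + (j+1) by ring] at h1
      have h3 := ih (m+1)
      push_cast at *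
      by_cases h0 : 0 ≤ a (m+(j+1)) - 2 * a (m+(j+1)+1) + a (m+(j+1)+2)
      · nlinarith
      · have := ha m
        have : ((j:ℝ)+1)^2/2 ≥ 0 := by positivity
        nlinarith
  have := hA n 0
  simpa using this

section
variable {Ω : Type} [Fintype Ω] [DecidableEq Ω]

theorem contr {P : Matrix Ω Ω ℝ} {pi : Ω → ℝ} (h : IsMC P pi) (f : Ω → ℝ) :
    ∑ x, pi x * (P *ᵥ f) x ^ 2 ≤ ∑ x, pi x * f x ^ 2 := by
  obtain ⟨⟨hP0, hP1⟩, -, ⟨hpi0, hpi1⟩, hst⟩ := h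
  have h1 : ∀ x, (P *ᵥ f) x ^ 2 ≤ ∑ y, P x y * f y ^ 2 := by
    intro x
    have := (even_two.convexOn_pow (𝕜 := ℝ)).map_sum_le (t := Finset.univ) (w := fun y => P x y)
      (p := f) (fun y _ => hP0 x y) (hP1 x) (fun _ _ => Set.mem_univ _)
    simpa [Matrix.mulVec, dotProduct, smul_eq_mul] using this
  calc ∑ x, pi x * (P *ᵥ f) x ^ 2 ≤ ∑ x, pi x * ∑ y, P x y * f y ^ 2 :=
        Finset.sum_le_sum fun x _ => mul_le_mul_of_nonneg_left (h1 x) (hpi0 x)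
    _ = ∑ y, (∑ x, pi x * P x y) * f y ^ 2 := by
        simp_rw [Finset.mul_sum, Finset.sum_mul]
        rw [Finset.sum_comm]
        simp_rw [mul_assoc]
    _ = ∑ x, pi x * f x ^ 2 := by
        refine Finset.sum_congr rfl fun y _ => ?_
        have : (pi ᵥ* P) y = pi y := by rw [hst]
        rw [← this]; rfl

theorem selfadj {P : Matrix Ω Ω ℝ} {pi : Ω → ℝ} (h : IsReversible P pi) (f g : Ω → ℝ) :
    ∑ x, pi x * (f x * (P *ᵥ g) x) = ∑ x, pi x * ((P *ᵥ f) x * g x) := by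
  simp only [Matrix.mulVec, dotProduct, Finset.mul_sum, Finset.sum_mul]
  rw [Finset.sum_comm]
  refine Finset.sum_congr rfl fun y _ => Finset.sum_congr rfl fun x _ => ?_
  linear_combination (f x * g y) * h x y

theorem step_l2 {P : Matrix Ω Ω ℝ} {pi : Ω → ℝ} (h : IsRevMC P pi) (f : Ω → ℝ) (n : ℕ) :
    (n:ℝ)^2 / 2 * ∑ x, pi x * ((P^n *ᵥ f) x - (P^(n+2) *ᵥ f) x)^2 ≤ ∑ x, pi x * f x ^ 2 := by
  obtain ⟨hM, hR⟩ := h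
  have hpi0 := hM.2.2.1.1
  have hs : ∀ k (g : Ω → ℝ), P^(k+1) *ᵥ g = P *ᵥ (P^k *ᵥ g) := by
    intro k g; rw [pow_succ', ← Matrix.mulVec_mulVec]
  have key : ∀ k, ∑ x, pi x * ((P^k *ᵥ f) x - (P^(k+2) *ᵥ f) x)^2
      = ∑ x, pi x * (P^k *ᵥ f) x ^ 2 - 2 * ∑ x, pi x * (P^(k+1) *ᵥ f) x ^ 2
        + ∑ x, pi x * (P^(k+2) *ᵥ f) x ^ 2 := by
    intro k
    have e := selfadj hR (P^k *ᵥ f) (P^(k+1) *ᵥ f)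
    rw [← hs, ← hs] at e
    have e2 : ∑ x, pi x * (P^(k+1) *ᵥ f) x ^ 2
        = ∑ x, pi x * ((P^k *ᵥ f) x * (P^(k+2) *ᵥ f) x) := by
      rw [e]; refine Finset.sum_congr rfl fun x _ => ?_
      ring
    rw [e2, Finset.mul_sum, ← Finset.sum_sub_distrib, ← Finset.sum_add_distrib]
    refine Finset.sum_congr rfl fun x _ => ?_
    ring
  have := seq_bound (fun k => ∑ x, pi x * (P^k *ᵥ f) x ^ 2)
    (fun k => Finset.sum_nonneg fun x _ => mul_nonneg (hpi0 x) (sq_nonneg _))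
    (fun k => by rw [hs]; exact contr hM _)
    (fun k => by
      have h1 := key k
      have h2 := key (k+1)
      simp only [show k + 1 + 1 = k + 2 by ring, show k + 1 + 2 = k + 3 by ring] at h2
      rw [← h1, ← h2, hs (k+2), hs k]
      have h3 := contr hM (P^k *ᵥ f - P^(k+2) *ᵥ f)
      rw [Matrix.mulVec_sub] at h3
      simpa using h3) n
  rw [← key] at this
  simpa using this

/-- averaged operator -/
noncomputable def Av (P : Matrix Ω Ω ℝ) (n : ℕ) (f : Ω → ℝ) : Ω → ℝ :=
  fun x => ((P^n *ᵥ f) x + (P^(n+1) *ᵥ f) x) / 2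

theorem step_l1 {P : Matrix Ω Ω ℝ} {pi : Ω → ℝ} (h : IsRevMC P pi) (f : Ω → ℝ)
    (hf : ∀ x, 0 ≤ f x ∧ f x ≤ 1) (n : ℕ) (hn : 0 < n) :
    ∑ x, pi x * |Av P (n+1) f x - Av P n f x| ≤ 1 / n := by
  have hpi0 := h.1.2.2.1.1
  have hpi1 := h.1.2.2.1.2
  have hn' : (0:ℝ) < n := by exact_mod_cast hn
  have h1 := step_l2 h f n
  have h2 : ∑ x, pi x * f x ^ 2 ≤ 1 := by
    rw [← hpi1]
    refine Finset.sum_le_sum fun x _ => ?_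
    have := hf x
    have : f x ^ 2 ≤ 1 := by nlinarith
    nlinarith [hpi0 x]
  have h3 : (∑ x, pi x * |Av P (n+1) f x - Av P n f x|)^2
      ≤ ∑ x, pi x * |Av P (n+1) f x - Av P n f x|^2 := by
    have := (even_two.convexOn_pow (𝕜 := ℝ)).map_sum_le (t := Finset.univ) (w := pi)
      (p := fun x => |Av P (n+1) f x - Av P n f x|)
      (fun y _ => hpi0 y) hpi1 (fun _ _ => Set.mem_univ _)
    simpa only [smul_eq_mul] using this
  have h4 : ∑ x, pi x * |Av P (n+1) f x - Av P n f x|^2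
      = (∑ x, pi x * ((P^n *ᵥ f) x - (P^(n+2) *ᵥ f) x)^2) / 4 := by
    rw [Finset.sum_div]
    refine Finset.sum_congr rfl fun x _ => ?_
    rw [sq_abs]; unfold Av
    rw [show n + 1 + 1 = n + 2 by ring]; ring
  refine abs_le_of_sq_le_sq' ?_ (by positivity) |>.2
  rw [div_pow, one_pow, le_div_iff₀ (by positivity)]
  nlinarith [mul_le_mul_of_nonneg_left h3 (sq_nonneg (n:ℝ))]

theorem tv_le {ν pi h : Ω → ℝ} (hν : ∑ x, ν x = 1) (hpi : ∑ x, pi x = 1)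
    (hh : ∀ x, 0 ≤ h x ∧ h x ≤ 1) : ∑ x, pi x * h x - ∑ x, ν x * h x ≤ tvDist ν pi := by
  have : ∑ x, pi x * h x - ∑ x, ν x * h x = ∑ x, (h x - 1/2) * (pi x - ν x) := by
    simp only [sub_mul, mul_sub, Finset.sum_sub_distrib, ← Finset.mul_sum, hν, hpi]
    simp only [mul_comm]; ring
  rw [this, tvDist, Finset.sum_div]
  refine Finset.sum_le_sum fun x _ => ?_
  refine (le_abs_self _).trans ?_
  rw [abs_mul, abs_sub_comm (ν x)]
  have : |h x - 1/2| ≤ 1/2 := by rw [abs_le]; constructor <;> linarith [hh x]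
  nlinarith [abs_nonneg (pi x - ν x)]

theorem tv_eq {ν pi : Ω → ℝ} (hν : ∑ x, ν x = 1) (hpi : ∑ x, pi x = 1) :
    ∃ f : Ω → ℝ, (∀ x, 0 ≤ f x ∧ f x ≤ 1) ∧
      tvDist ν pi = ∑ x, pi x * f x - ∑ x, ν x * f x := by
  refine ⟨fun x => if ν x < pi x then 1 else 0, fun x => by dsimp only; split_ifs <;> norm_num, ?_⟩
  have : tvDist ν pi = tvDist ν pi + (∑ x, pi x - ∑ x, ν x) / 2 := by rw [hν, hpi]; ring
  rw [this, tvDist, ← Finset.sum_sub_distrib, ← Finset.sum_sub_distrib, ← add_div,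
    ← Finset.sum_add_distrib, Finset.sum_div]
  refine Finset.sum_congr rfl fun x _ => ?_
  dsimp only
  split_ifs with hx
  · rw [abs_of_neg (by linarith)]; ring
  · rw [abs_of_nonneg (by linarith)]; ring

theorem prob_pow {P : Matrix Ω Ω ℝ} (hP : IsStochastic P) {μ : Ω → ℝ} (hμ : IsProbVec μ) (k : ℕ) :
    IsProbVec (μ ᵥ* P^k) := by
  induction k with
  | zero => simpa using hμ
  | succ k ih =>
    rw [pow_succ, ← Matrix.vecMul_vecMul]
    refine ⟨fun y => Finset.sum_nonneg fun x _ => mul_nonneg (ih.1 x) (hP.1 x y), ?_⟩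
    simp only [Matrix.vecMul, dotProduct] at ih ⊢
    rw [Finset.sum_comm]
    simp_rw [← Finset.mul_sum, hP.2, mul_one]
    exact ih.2

theorem pow_nonneg' {P : Matrix Ω Ω ℝ} (hP : IsStochastic P) {f : Ω → ℝ} (hf : ∀ x, 0 ≤ f x ∧ f x ≤ 1)
    (k : ℕ) (x : Ω) : 0 ≤ (P^k *ᵥ f) x ∧ (P^k *ᵥ f) x ≤ 1 := by
  induction k generalizing x with
  | zero => simpa using hf x
  | succ k ih =>
    rw [pow_succ', ← Matrix.mulVec_mulVec]
    refine ⟨Finset.sum_nonneg fun y _ => mul_nonneg (hP.1 x y) (ih y).1, ?_⟩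
    rw [← hP.2 x]
    refine Finset.sum_le_sum fun y _ => ?_
    nlinarith [hP.1 x y, (ih y).2]

theorem pi_pow {P : Matrix Ω Ω ℝ} {pi : Ω → ℝ} (h : pi ᵥ* P = pi) (k : ℕ) :
    pi ᵥ* P^k = pi := by
  induction k with
  | zero => simp
  | succ k ih => rw [pow_succ, ← Matrix.vecMul_vecMul, ih, h]

theorem pi_Av {P : Matrix Ω Ω ℝ} {pi : Ω → ℝ} (h : pi ᵥ* P = pi) (n : ℕ) (f : Ω → ℝ) :
    ∑ x, pi x * Av P n f x = ∑ x, pi x * f x := by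
  have e : ∀ k, ∑ x, pi x * (P^k *ᵥ f) x = ∑ x, pi x * f x := by
    intro k
    have : pi ⬝ᵥ (P^k *ᵥ f) = pi ⬝ᵥ f := by rw [Matrix.dotProduct_mulVec, pi_pow h]
    exact this
  unfold Av
  have : ∀ x, pi x * (((P^n *ᵥ f) x + (P^(n+1) *ᵥ f) x) / 2)
      = (pi x * (P^n *ᵥ f) x + pi x * (P^(n+1) *ᵥ f) x) / 2 := fun x => by ring
  simp_rw [this]
  rw [← Finset.sum_div, Finset.sum_add_distrib, e, e]; ring

theorem mu_Av (P : Matrix Ω Ω ℝ) (μ : Ω → ℝ) (k n : ℕ) (f : Ω → ℝ) :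
    ∑ x, (μ ᵥ* P^k) x * Av P n f x
      = ∑ y, (((μ ᵥ* (P ^ (k+n))) y + (μ ᵥ* (P ^ (k+n + 1))) y) / 2) * f y := by
  have e : ∀ m, ∑ x, (μ ᵥ* P^k) x * (P^m *ᵥ f) x = ∑ x, (μ ᵥ* P^(k+m)) x * f x := by
    intro m
    have : (μ ᵥ* P^k) ⬝ᵥ (P^m *ᵥ f) = (μ ᵥ* P^(k+m)) ⬝ᵥ f := by
      rw [Matrix.dotProduct_mulVec, Matrix.vecMul_vecMul, pow_add]
    exact this
  unfold Av
  have h1 : ∀ x, (μ ᵥ* P^k) x * (((P^n *ᵥ f) x + (P^(n+1) *ᵥ f) x) / 2)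
      = ((μ ᵥ* P^k) x * (P^n *ᵥ f) x + (μ ᵥ* P^k) x * (P^(n+1) *ᵥ f) x) / 2 := fun x => by ring
  have h2 : ∀ y, (((μ ᵥ* (P ^ (k+n))) y + (μ ᵥ* (P ^ (k+n + 1))) y) / 2) * f y
      = ((μ ᵥ* (P ^ (k+n))) y * f y + (μ ᵥ* (P ^ (k+n + 1))) y * f y) / 2 := fun y => by ring
  simp_rw [h1, h2]
  rw [← Finset.sum_div, ← Finset.sum_div, Finset.sum_add_distrib, Finset.sum_add_distrib, e, e]
  rfl

theorem hasSum_pois (t r : ℝ) :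
    HasSum (fun k : ℕ => Real.exp (-t) * t ^ k / (Nat.factorial k) * r^k)
      (Real.exp (t * r - t)) := by
  have h := (NormedSpace.expSeries_div_hasSum_exp (t * r)).mul_left (Real.exp (-t))
  rw [← Real.exp_eq_exp_ℝ, ← Real.exp_add] at h
  have e1 : (fun k : ℕ => Real.exp (-t) * t ^ k / (Nat.factorial k) * r^k)
      = fun i : ℕ => Real.exp (-t) * ((t * r) ^ i / (Nat.factorial i)) := by
    funext k; rw [mul_pow]; ring
  rw [e1, show t * r - t = -t + t * r by ring]
  exact h

/-- the lower function -/
noncomputable def low (P : Matrix Ω Ω ℝ) (a b : ℕ) (f : Ω → ℝ) : Ω → ℝ :=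
  fun x => max 0 (Av P a f x - ∑ i ∈ Finset.Ico a b, |Av P (i+1) f x - Av P i f x|)

theorem Av_mem {P : Matrix Ω Ω ℝ} (hP : IsStochastic P) {f : Ω → ℝ}
    (hf : ∀ x, 0 ≤ f x ∧ f x ≤ 1) (k : ℕ) (x : Ω) : 0 ≤ Av P k f x ∧ Av P k f x ≤ 1 := by
  have h1 := pow_nonneg' hP hf k x
  have h2 := pow_nonneg' hP hf (k+1) x
  unfold Av
  constructor <;> linarith

theorem low_le {P : Matrix Ω Ω ℝ} (hP : IsStochastic P) {f : Ω → ℝ}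
    (hf : ∀ x, 0 ≤ f x ∧ f x ≤ 1) {a b n : ℕ} (han : a ≤ n) (hnb : n ≤ b) (x : Ω) :
    low P a b f x ≤ Av P n f x := by
  refine max_le (Av_mem hP hf n x).1 ?_
  have h1 : ∑ i ∈ Finset.Ico a n, |Av P (i+1) f x - Av P i f x|
      ≤ ∑ i ∈ Finset.Ico a b, |Av P (i+1) f x - Av P i f x| :=
    Finset.sum_le_sum_of_subset_of_nonneg (Finset.Ico_subset_Ico le_rfl hnb)
      fun _ _ _ => abs_nonneg _
  have h2 := Finset.abs_sum_le_sum_abs (fun i => Av P (i+1) f x - Av P i f x) (Finset.Ico a n)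
  rw [Finset.sum_Ico_sub (fun i => Av P i f x) han] at h2
  have := neg_abs_le (Av P n f x - Av P a f x)
  linarith

theorem low_mem {P : Matrix Ω Ω ℝ} (hP : IsStochastic P) {f : Ω → ℝ}
    (hf : ∀ x, 0 ≤ f x ∧ f x ≤ 1) {a b : ℕ} (hab : a ≤ b) (x : Ω) :
    0 ≤ low P a b f x ∧ low P a b f x ≤ 1 :=
  ⟨le_max_left _ _, (low_le hP hf le_rfl hab x).trans (Av_mem hP hf a x).2⟩

theorem pi_low {P : Matrix Ω Ω ℝ} {pi : Ω → ℝ} (h : IsRevMC P pi) {f : Ω → ℝ}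
    (hf : ∀ x, 0 ≤ f x ∧ f x ≤ 1) {a b : ℕ} (ha : 0 < a) (hab : a ≤ b) :
    ∑ x, pi x * f x - ((b:ℝ) - a) / a ≤ ∑ x, pi x * low P a b f x := by
  have hpi0 := h.1.2.2.1.1
  rw [← pi_Av h.1.2.2.2 a f]
  have ha' : (0:ℝ) < a := by exact_mod_cast ha
  have h1 : ∑ x, pi x * (Av P a f x - ∑ i ∈ Finset.Ico a b, |Av P (i+1) f x - Av P i f x|)
      ≤ ∑ x, pi x * low P a b f x :=
    Finset.sum_le_sum fun x _ => mul_le_mul_of_nonneg_left (le_max_right _ _) (hpi0 x)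
  simp_rw [mul_sub, Finset.mul_sum] at h1
  rw [Finset.sum_sub_distrib, Finset.sum_comm (s := Finset.univ)] at h1
  have h2 : ∑ i ∈ Finset.Ico a b, ∑ x, pi x * |Av P (i+1) f x - Av P i f x|
      ≤ ∑ i ∈ Finset.Ico a b, 1 / (a:ℝ) := by
    refine Finset.sum_le_sum fun i hi => ?_
    rw [Finset.mem_Ico] at hi
    refine (step_l1 h f hf i (by omega)).trans ?_
    have : (a:ℝ) ≤ i := by exact_mod_cast hi.1
    gcongr
  rw [Finset.sum_const, Nat.card_Ico, nsmul_eq_mul, Nat.cast_sub hab] at h2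
  rw [mul_one_div] at h2
  linarith

theorem core {P : Matrix Ω Ω ℝ} {pi : Ω → ℝ} (h : IsRevMC P pi) {μ : Ω → ℝ} (hμ : IsProbVec μ)
    {t θ w : ℝ} (ht : 0 ≤ t) (hθ0 : 0 ≤ θ) (hθ : θ ≤ 1) {k0 k1 N : ℕ} (hk : k0 ≤ k1) (hN : k1 < N)
    (hlo : ∀ k : ℕ, k < k0 → (k:ℝ) ≤ t - w) (hhi : ∀ k : ℕ, k1 < k → t + w ≤ k) :
    tvDist (fun y => ((μ ᵥ* (P ^ N)) y + (μ ᵥ* (P ^ (N + 1))) y) / 2) pi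
      ≤ contDist P pi t μ + ((k1:ℝ) - k0) / ((N:ℝ) - k1)
        + 2 * Real.exp (t * θ^2 - θ * w) := by
  have hP := h.1.1
  have hpi := h.1.2.2.1
  have hpr := fun k => prob_pow hP hμ k
  have hsum : ∑ y, ((μ ᵥ* (P ^ N)) y + (μ ᵥ* (P ^ (N + 1))) y) / 2 = 1 := by
    rw [← Finset.sum_div, Finset.sum_add_distrib, (hpr N).2, (hpr (N+1)).2]; norm_num
  obtain ⟨f, hf, hfe⟩ := tv_eq hsum hpi.2
  rw [hfe]
  set u := ∑ y, (((μ ᵥ* (P ^ N)) y + (μ ᵥ* (P ^ (N + 1))) y) / 2) * f y with hu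
  have hu0 : 0 ≤ u := Finset.sum_nonneg fun y _ =>
    mul_nonneg (by linarith [(hpr N).1 y, (hpr (N+1)).1 y]) (hf y).1
  set g := low P (N - k1) (N - k0) f with hg
  have hgm : ∀ x, 0 ≤ g x ∧ g x ≤ 1 := low_mem hP hf (by omega)
  have h1 := pi_low h hf (a := N - k1) (b := N - k0) (by omega) (by omega)
  rw [Nat.cast_sub hN.le, Nat.cast_sub (hk.trans hN.le)] at h1
  rw [show (N:ℝ) - k0 - (N - k1) = k1 - k0 by ring] at h1
  set p : ℕ → ℝ := fun k => Real.exp (-t) * t ^ k / (Nat.factorial k) with hp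
  have hp0 : ∀ k, 0 ≤ p k := fun k => by positivity
  have hps : HasSum p 1 := by simpa using hasSum_pois t 1
  have hle1 : ∀ k y, (μ ᵥ* P^k) y ≤ 1 := fun k y => by
    rw [← (hpr k).2]
    exact Finset.single_le_sum (fun x _ => (hpr k).1 x) (Finset.mem_univ y)
  have hsm : ∀ y, Summable fun k => p k * (μ ᵥ* P^k) y := fun y =>
    Summable.of_nonneg_of_le (fun k => mul_nonneg (hp0 k) ((hpr k).1 y))
      (fun k => mul_le_of_le_one_right (hp0 k) (hle1 k y)) hps.summable
  have hw : ∀ r : Ω → ℝ, HasSum (fun k => p k * ∑ y, (μ ᵥ* P^k) y * r y)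
      (∑ y, (∑' k, p k * (μ ᵥ* P^k) y) * r y) := by
    intro r
    have := hasSum_sum (s := Finset.univ) fun y _ => ((hsm y).hasSum).mul_right (r y)
    have e1 : (fun k => p k * ∑ y, (μ ᵥ* P^k) y * r y)
        = fun k => ∑ y, p k * (μ ᵥ* P^k) y * r y := by
      funext k
      rw [Finset.mul_sum]
      exact Finset.sum_congr rfl fun y _ => by ring
    rw [e1]
    exact this
  have hν1 : ∑ y, (∑' k, p k * (μ ᵥ* P^k) y) = 1 := by
    have := hw (fun _ => 1)
    simp only [mul_one, (hpr _).2] at this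
    exact this.unique hps
  have h2 := tv_le hν1 hpi.2 hgm
  have h3 : tvDist (fun y => ∑' k, p k * (μ ᵥ* P^k) y) pi = contDist P pi t μ := rfl
  rw [h3] at h2
  have hup := (hasSum_pois t (Real.exp θ)).mul_right (Real.exp (-θ * t - θ * w))
  have hdn := (hasSum_pois t (Real.exp (-θ))).mul_right (Real.exp (θ * t - θ * w))
  have h4 := hasSum_le (fun k => ?_) (hw g) (((hps.mul_right u).add hup).add hdn)
  · rw [← Real.exp_add, ← Real.exp_add, one_mul] at h4
    have b1 := Real.abs_exp_sub_one_sub_id_le (x := θ) (by rw [abs_of_nonneg hθ0]; exact hθ)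
    have b2 := Real.abs_exp_sub_one_sub_id_le (x := -θ) (by rw [abs_neg, abs_of_nonneg hθ0]; exact hθ)
    have c1 : Real.exp (t * Real.exp θ - t + (-θ * t - θ * w)) ≤ Real.exp (t * θ^2 - θ * w) := by
      apply Real.exp_le_exp.2
      nlinarith [(abs_le.1 b1).2]
    have c2 : Real.exp (t * Real.exp (-θ) - t + (θ * t - θ * w)) ≤ Real.exp (t * θ^2 - θ * w) := by
      apply Real.exp_le_exp.2
      nlinarith [(abs_le.1 b2).2]
    linarith
  · change p k * _ ≤ p k * u + p k * Real.exp θ ^ k * Real.exp (-θ * t - θ * w)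
      + p k * Real.exp (-θ) ^ k * Real.exp (θ * t - θ * w)
    rw [← Real.exp_nat_mul, ← Real.exp_nat_mul, mul_assoc, mul_assoc, ← Real.exp_add,
      ← Real.exp_add, ← mul_add, ← mul_add]
    refine mul_le_mul_of_nonneg_left ?_ (hp0 k)
    have e1 := Real.exp_pos (k * θ + (-θ * t - θ * w))
    have e2 := Real.exp_pos (k * -θ + (θ * t - θ * w))
    have hq1 : ∑ y, (μ ᵥ* P^k) y * g y ≤ 1 := by
      rw [← (hpr k).2]
      exact Finset.sum_le_sum fun y _ => mul_le_of_le_one_right ((hpr k).1 y) (hgm y).2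
    by_cases hk0 : k < k0
    · have := Real.one_le_exp (x := k * -θ + (θ * t - θ * w)) (by nlinarith [hlo k hk0])
      linarith
    by_cases hk1 : k1 < k
    · have := Real.one_le_exp (x := k * θ + (-θ * t - θ * w)) (by nlinarith [hhi k hk1])
      linarith
    have : ∑ y, (μ ᵥ* P^k) y * g y ≤ u := by
      have e := mu_Av P μ k (N - k) f
      rw [show k + (N - k) = N by omega] at e
      rw [hu, ← e]
      exact Finset.sum_le_sum fun y _ => mul_le_mul_of_nonneg_left
        (low_le hP hf (by omega) (by omega) y) ((hpr k).1 y)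
    linarith

theorem tv_le_one {ν pi : Ω → ℝ} (hν : IsProbVec ν) (hpi : IsProbVec pi) : tvDist ν pi ≤ 1 := by
  obtain ⟨f, hf, e⟩ := tv_eq hν.2 hpi.2
  rw [e]
  have h1 : ∑ x, pi x * f x ≤ 1 := by
    rw [← hpi.2]
    exact Finset.sum_le_sum fun y _ => mul_le_of_le_one_right (hpi.1 y) (hf y).2
  have h2 : 0 ≤ ∑ x, ν x * f x := Finset.sum_nonneg fun y _ => mul_nonneg (hν.1 y) (hf y).1
  linarith

theorem main {P : Matrix Ω Ω ℝ} {pi : Ω → ℝ} (h : IsRevMC P pi) {μ : Ω → ℝ} (hμ : IsProbVec μ)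
    {α t : ℝ} (hα : 0 < α) (hα2 : α ≤ 1/2) (ht : 1 ≤ t) :
    aveDist P pi (phiAC α 4 t) μ ≤ contDist P pi t μ + 2 * (5/2) * t ^ (-α) := by
  have ht0 : 0 < t := by linarith
  have hlog := Real.log_nonneg ht
  set L := α * Real.log t with hL
  have hL0 : 0 ≤ L := by positivity
  have htα : t ^ (-α) = Real.exp (-L) := by
    rw [Real.rpow_def_of_pos ht0]; congr 1; rw [hL]; ring
  have htα' : t ^ α = Real.exp L := by
    rw [Real.rpow_def_of_pos ht0]; congr 1; rw [hL]; ring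
  have hpr := fun k => prob_pow h.1.1 hμ k
  rcases lt_or_ge L 1 with hL1 | hL1
  · have h1 : aveDist P pi (phiAC α 4 t) μ ≤ 1 := by
      refine tv_le_one ⟨fun y => ?_, ?_⟩ h.1.2.2.1
      · have := (hpr ⌊phiAC α 4 t⌋₊).1 y
        have := (hpr (⌊phiAC α 4 t⌋₊+1)).1 y
        positivity
      · rw [← Finset.sum_div, Finset.sum_add_distrib, (hpr _).2, (hpr _).2]; norm_num
    have h2 : 0 ≤ contDist P pi t μ := by
      unfold contDist tvDist; positivity
    have h3 : Real.exp (-1) ≤ t ^ (-α) := by rw [htα]; exact Real.exp_le_exp.2 (by linarith)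
    have h4 : (1:ℝ)/5 ≤ Real.exp (-1) := by
      rw [Real.exp_neg, ← one_div]
      exact one_div_le_one_div_of_le (Real.exp_pos 1) (by linarith [Real.exp_one_lt_d9])
    linarith
  · have hLt : L ≤ t := by
      have := Real.log_le_sub_one_of_pos ht0
      nlinarith
    set w := 2 * Real.sqrt (t * L) with hwdef
    have hsq : Real.sqrt (t * L) ^ 2 = t * L := Real.sq_sqrt (by positivity)
    have hs1 : 1 ≤ Real.sqrt (t * L) := by
      rw [Real.one_le_sqrt]; nlinarith
    have hE : 2 ≤ Real.exp L := by linarith [Real.add_one_le_exp L]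
    set S : ℤ := ⌈4 * t ^ ((1 + 2 * α) / 2) * Real.sqrt (α * Real.log t)⌉ with hS
    have hX : 4 * t ^ ((1 + 2 * α) / 2) * Real.sqrt (α * Real.log t)
        = 2 * Real.exp L * w := by
      rw [show (1 + 2 * α) / 2 = 1/2 + α by ring, Real.rpow_add ht0, htα', ← Real.sqrt_eq_rpow,
        hwdef, Real.sqrt_mul ht0.le, ← hL]; ring
    have hSle : 2 * Real.exp L * w ≤ S := by rw [← hX]; exact Int.le_ceil _
    set N := ⌊phiAC α 4 t⌋₊ with hNdef
    have hNgt : t + S - 1 < N := by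
      have := Nat.sub_one_lt_floor (phiAC α 4 t)
      exact this
    set k0 := ⌈t - w⌉₊ with hk0
    set k1 := ⌊t + w⌋₊ with hk1
    have hk1le : (k1:ℝ) ≤ t + w := Nat.floor_le (by positivity)
    have hk0ge : t - w ≤ k0 := Nat.le_ceil _
    have hw2 : 2 ≤ w := by linarith
    have hgap : Real.exp L * w ≤ (N:ℝ) - k1 := by nlinarith
    have hgap0 : 0 < Real.exp L * w := by positivity
    have hk : k0 ≤ k1 := by
      refine Nat.ceil_le.2 ?_
      have := Nat.lt_floor_add_one (t + w)
      rw [← hk1] at this; linarith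
    have hc := core h hμ (t := t) (θ := Real.sqrt (L / t)) (w := w) (k0 := k0) (k1 := k1) (N := N)
      ht0.le (Real.sqrt_nonneg _) (Real.sqrt_le_one.2 ((div_le_one ht0).2 hLt)) hk
      (by
        have : (k1:ℝ) < N := by linarith
        exact_mod_cast this)
      (fun k hkk => (Nat.lt_ceil.1 hkk).le)
      (fun k hkk => ((Nat.floor_lt (by positivity)).1 hkk).le)
    have he : t * Real.sqrt (L/t)^2 - Real.sqrt (L/t) * w = -L := by
      rw [Real.sq_sqrt (by positivity), hwdef, mul_left_comm, ← Real.sqrt_mul (by positivity),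
        show L / t * (t * L) = L^2 by field_simp, Real.sqrt_sq hL0]
      field_simp; ring
    rw [he] at hc
    have hd : ((k1:ℝ) - k0) / ((N:ℝ) - k1) ≤ 2 * Real.exp (-L) := by
      rw [div_le_iff₀ (by linarith)]
      have : Real.exp (-L) * Real.exp L = 1 := by rw [← Real.exp_add]; simp
      have h5 := mul_le_mul_of_nonneg_left hgap (Real.exp_pos (-L)).le
      rw [← mul_assoc, this] at h5
      linarith
    rw [htα]
    have := Real.exp_pos (-L)
    change tvDist _ _ ≤ _
    linarith

theorem delta_prob (x : Ω) : IsProbVec (deltaMass x) := by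
  refine ⟨fun y => ?_, ?_⟩
  · unfold deltaMass; split_ifs <;> norm_num
  · simp [deltaMass]

end
end AveAux

/-- **Theorem 1 (eq. (3)) of Hermon–Peres.**
There are absolute constants `C₂, C₃ > 0` such that for every finite irreducible reversible
Markov chain, every initial distribution `μ`, every `0 < α ≤ 1/2` and every `t ≥ 1`,
`d_ave(φ_{α,C₃}(t), μ) ≤ d_c(t, μ) + 2 C₂ t^{-α}`, and the same holds for the worst-case
distances. -/
theorem ave_dist_le_cont_dist :
    ∃ C₂ C₃ : ℝ, 0 < C₂ ∧ 0 < C₃ ∧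
      ∀ (Ω : Type) [Fintype Ω] [DecidableEq Ω] [Nonempty Ω]
        (P : Matrix Ω Ω ℝ) (pi : Ω → ℝ), IsRevMC P pi →
        ∀ α t : ℝ, 0 < α → α ≤ 1 / 2 → 1 ≤ t →
          (∀ μ : Ω → ℝ, IsProbVec μ →
            aveDist P pi (phiAC α C₃ t) μ ≤ contDist P pi t μ + 2 * C₂ * t ^ (-α)) ∧
          aveDistMax P pi (phiAC α C₃ t) ≤ contDistMax P pi t + 2 * C₂ * t ^ (-α) := by
  refine ⟨5/2, 4, by norm_num, by norm_num, ?_⟩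
  intro Ω _ _ _ P pi h α t hα hα2 ht
  refine ⟨fun μ hμ => AveAux.main h hμ hα hα2 ht, ?_⟩
  refine ciSup_le fun x => (AveAux.main h (AveAux.delta_prob x) hα hα2 ht).trans ?_
  have := le_ciSup (f := fun x => contDist P pi t (deltaMass x)) (Set.finite_range _).bddAbove x
  unfold contDistMax
  linarith
end

section
/- There exists an absolute constant C such that for every finite irreducible reversible Markov chain (Ω,P,π), every probability measure μ on Ω, every real t ≥ 2 and every s with 2 ≤ s ≤ e^t: d_ave(t + ⌈s√t⌉, μ) ≤ d_L(2t, μ) + C · s^{−1} √(log s). -/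
open Matrix Filter Asymptotics

lemma aux_seq (ψ : ℕ → ℝ) (h0 : ∀ k, 0 ≤ ψ k) (h1 : ∀ k, ψ (k + 1) ≤ ψ k)
    (h2 : ∀ k, ψ (k + 1) - 2 * ψ (k + 2) + ψ (k + 3) ≤ ψ k - 2 * ψ (k + 1) + ψ (k + 2))
    (k : ℕ) :
    (ψ k - 2 * ψ (k + 1) + ψ (k + 2)) * ((k + 1) * (k + 2) / 2) ≤ ψ 0 := by
  have key : ∀ k : ℕ, (ψ k - 2 * ψ (k + 1) + ψ (k + 2)) * (((k : ℝ) + 1) * (k + 2) / 2) ≤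
      ψ 0 - ψ (k + 1) - ((k : ℝ) + 1) * (ψ (k + 1) - ψ (k + 2)) := by
    intro k
    induction k with
    | zero => norm_num; linarith
    | succ k ih =>
      have h := mul_le_mul_of_nonneg_right (h2 k)
        (show (0 : ℝ) ≤ ((k : ℝ) + 1) * (k + 2) / 2 by positivity)
      have e1 : k + 1 + 1 = k + 2 := rfl
      have e2 : k + 1 + 2 = k + 3 := rfl
      rw [e1, e2]
      push_cast
      nlinarith
  have := key k
  have h3 := h0 (k + 1)
  have h4 : 0 ≤ ((k : ℝ) + 1) * (ψ (k + 1) - ψ (k + 2)) :=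
    mul_nonneg (by positivity) (by linarith [h1 (k + 1)])
  linarith

section chain
set_option linter.unusedSectionVars false
variable {Ω : Type} [Fintype Ω] [DecidableEq Ω]

lemma aux_symm {P : Matrix Ω Ω ℝ} {pi : Ω → ℝ} (h : IsReversible P pi) (f g : Ω → ℝ) :
    ∑ x, pi x * (P *ᵥ f) x * g x = ∑ x, pi x * f x * (P *ᵥ g) x := by
  simp only [mulVec, dotProduct, Finset.mul_sum, Finset.sum_mul]
  rw [Finset.sum_comm]
  refine Finset.sum_congr rfl fun y _ => Finset.sum_congr rfl fun x _ => ?_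
  linear_combination (f y * g x) * h x y

lemma aux_stat {P : Matrix Ω Ω ℝ} {pi : Ω → ℝ} (h : pi ᵥ* P = pi) (f : Ω → ℝ) :
    pi ⬝ᵥ (P *ᵥ f) = pi ⬝ᵥ f := by
  rw [dotProduct_mulVec, h]

lemma aux_stat_pow {P : Matrix Ω Ω ℝ} {pi : Ω → ℝ} (h : pi ᵥ* P = pi) (f : Ω → ℝ) (k : ℕ) :
    pi ⬝ᵥ (P ^ k *ᵥ f) = pi ⬝ᵥ f := by
  induction k with
  | zero => simp
  | succ k ih => rw [pow_succ', ← mulVec_mulVec, aux_stat h, ih]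

lemma aux_contr {P : Matrix Ω Ω ℝ} {pi : Ω → ℝ} (hP : IsStochastic P) (hpi : ∀ x, 0 ≤ pi x)
    (h : pi ᵥ* P = pi) (f : Ω → ℝ) :
    ∑ x, pi x * (P *ᵥ f) x ^ 2 ≤ ∑ x, pi x * f x ^ 2 := by
  have h1 := aux_stat h (fun x => f x ^ 2)
  simp only [dotProduct] at h1
  rw [← h1]
  refine Finset.sum_le_sum fun x _ => mul_le_mul_of_nonneg_left ?_ (hpi x)
  have := Real.pow_arith_mean_le_arith_mean_pow_of_even Finset.univ (P x) f
    (fun y _ => hP.1 x y) (hP.2 x) (n := 2) (by norm_num)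
  simpa [mulVec, dotProduct] using this

lemma aux_diff {P : Matrix Ω Ω ℝ} {pi : Ω → ℝ} (hP : IsStochastic P) (hpi : ∀ x, 0 ≤ pi x)
    (h : pi ᵥ* P = pi) (hr : IsReversible P pi) (f : Ω → ℝ) (k : ℕ) :
    (∑ x, pi x * ((P ^ (k + 2) *ᵥ f) x - (P ^ k *ᵥ f) x) ^ 2) * ((k + 1) * (k + 2) / 2) ≤
      ∑ x, pi x * f x ^ 2 := by
  set ψ : ℕ → ℝ := fun k => ∑ x, pi x * (P ^ k *ᵥ f) x ^ 2 with hψ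
  have hs : ∀ k, P ^ (k + 1) *ᵥ f = P *ᵥ (P ^ k *ᵥ f) := fun k => by
    rw [pow_succ', mulVec_mulVec]
  have hphi : ∀ k, ψ k - 2 * ψ (k + 1) + ψ (k + 2) =
      ∑ x, pi x * ((P ^ (k + 2) *ᵥ f) x - (P ^ k *ᵥ f) x) ^ 2 := by
    intro k
    have h1 := aux_symm hr (P ^ k *ᵥ f) (P ^ (k + 1) *ᵥ f)
    rw [← hs, ← hs] at h1
    have h2 : ψ (k + 1) = ∑ x, pi x * (P ^ k *ᵥ f) x * (P ^ (k + 1 + 1) *ᵥ f) x := by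
      rw [← h1]
      exact Finset.sum_congr rfl fun x _ => by ring
    rw [h2]
    simp only [hψ, Finset.mul_sum, ← Finset.sum_sub_distrib, ← Finset.sum_add_distrib]
    exact Finset.sum_congr rfl fun x _ => by ring
  have := aux_seq ψ (fun k => Finset.sum_nonneg fun x _ => mul_nonneg (hpi x) (sq_nonneg _))
    (fun k => by
      have := aux_contr hP hpi h (P ^ k *ᵥ f)
      rw [← hs] at this
      exact this)
    (fun k => by
      have h1 := hphi (k + 1)
      have h2 := hphi k
      have h3 := aux_contr hP hpi h (P ^ (k + 2) *ᵥ f - P ^ k *ᵥ f)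
      rw [mulVec_sub, ← hs, ← hs] at h3
      simp only [Pi.sub_apply] at h3
      have e : k + 1 + 2 = k + 2 + 1 := rfl
      rw [e] at h1
      linarith) k
  rw [hphi] at this
  simpa [hψ] using this

lemma aux_abs {P : Matrix Ω Ω ℝ} {pi : Ω → ℝ} (hP : IsStochastic P) (hpi : IsProbVec pi)
    (h : pi ᵥ* P = pi) (hr : IsReversible P pi) (f : Ω → ℝ)
    (hf : ∀ x, 0 ≤ f x ∧ f x ≤ 1) (k : ℕ) :
    ∑ x, pi x * |(P ^ (k + 2) *ᵥ f) x - (P ^ k *ᵥ f) x| ≤ 2 / (k + 1) := by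
  have h1 := aux_diff hP hpi.1 h hr f k
  have h2 : ∑ x, pi x * f x ^ 2 ≤ 1 := by
    rw [← hpi.2]
    refine Finset.sum_le_sum fun x _ => ?_
    have : f x ^ 2 ≤ 1 := by nlinarith [hf x]
    nlinarith [hpi.1 x]
  have h3 := Real.pow_arith_mean_le_arith_mean_pow_of_even Finset.univ pi
    (fun x => |(P ^ (k + 2) *ᵥ f) x - (P ^ k *ᵥ f) x|) (fun y _ => hpi.1 y) hpi.2
      (n := 2) (by norm_num)
  simp only [sq_abs] at h3
  set a := ∑ x, pi x * |(P ^ (k + 2) *ᵥ f) x - (P ^ k *ᵥ f) x|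
  set b := ∑ x, pi x * ((P ^ (k + 2) *ᵥ f) x - (P ^ k *ᵥ f) x) ^ 2
  have hk : (0 : ℝ) < (k : ℝ) + 1 := by positivity
  have hb : b * ((k : ℝ) + 1) ^ 2 ≤ 2 := by
    have : 0 ≤ b := Finset.sum_nonneg fun x _ => mul_nonneg (hpi.1 x) (sq_nonneg _)
    nlinarith
  rw [le_div_iff₀ hk]
  refine le_of_sq_le_sq ?_ (by norm_num)
  have := mul_le_mul_of_nonneg_right h3 (sq_nonneg ((k : ℝ) + 1))
  nlinarith

lemma aux_bd {P : Matrix Ω Ω ℝ} (hP : IsStochastic P) (f : Ω → ℝ)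
    (hf : ∀ x, 0 ≤ f x ∧ f x ≤ 1) (x : Ω) : 0 ≤ (P *ᵥ f) x ∧ (P *ᵥ f) x ≤ 1 := by
  simp only [mulVec, dotProduct]
  refine ⟨Finset.sum_nonneg fun y _ => mul_nonneg (hP.1 x y) (hf y).1, ?_⟩
  rw [← hP.2 x]
  exact Finset.sum_le_sum fun y _ => by nlinarith [hP.1 x y, hf y]

lemma aux_bd_pow {P : Matrix Ω Ω ℝ} (hP : IsStochastic P) (f : Ω → ℝ)
    (hf : ∀ x, 0 ≤ f x ∧ f x ≤ 1) (k : ℕ) : ∀ x, 0 ≤ (P ^ k *ᵥ f) x ∧ (P ^ k *ᵥ f) x ≤ 1 := by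
  induction k with
  | zero => simpa using hf
  | succ k ih =>
    intro x
    rw [pow_succ', ← mulVec_mulVec]
    exact aux_bd hP _ ih x

lemma aux_mono {P : Matrix Ω Ω ℝ} (hP : IsStochastic P) (f g : Ω → ℝ)
    (hf : ∀ x, f x ≤ g x) (k : ℕ) : ∀ x, (P ^ k *ᵥ f) x ≤ (P ^ k *ᵥ g) x := by
  induction k with
  | zero => simpa using hf
  | succ k ih =>
    intro x
    rw [pow_succ', ← mulVec_mulVec, ← mulVec_mulVec]
    exact Finset.sum_le_sum fun y _ => mul_le_mul_of_nonneg_left (ih y) (hP.1 x y)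

lemma aux_prob {μ f : Ω → ℝ} (hμ : IsProbVec μ)
    (hf : ∀ x, 0 ≤ f x ∧ f x ≤ 1) : 0 ≤ μ ⬝ᵥ f ∧ μ ⬝ᵥ f ≤ 1 := by
  refine ⟨Finset.sum_nonneg fun y _ => mul_nonneg (hμ.1 y) (hf y).1, ?_⟩
  rw [← hμ.2]
  exact Finset.sum_le_sum fun y _ => by nlinarith [hμ.1 y, hf y]

lemma aux_vec_sum {P : Matrix Ω Ω ℝ} (hP : IsStochastic P) {μ : Ω → ℝ} (hμ : ∑ x, μ x = 1)
    (k : ℕ) : ∑ x, (μ ᵥ* P ^ k) x = 1 := by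
  have h1 : P ^ k *ᵥ (1 : Ω → ℝ) = 1 := by
    induction k with
    | zero => simp
    | succ k ih =>
      rw [pow_succ', ← mulVec_mulVec, ih]
      ext x
      simpa [mulVec, dotProduct] using hP.2 x
  have h2 : (μ ᵥ* P ^ k) ⬝ᵥ 1 = 1 := by
    rw [← dotProduct_mulVec, h1]
    simpa [dotProduct] using hμ
  simpa [dotProduct] using h2

lemma aux_tv_le {α β : Ω → ℝ} (hα : ∑ x, α x = 1) (hβ : ∑ x, β x = 1) {f : Ω → ℝ}
    (hf : ∀ x, 0 ≤ f x ∧ f x ≤ 1) : α ⬝ᵥ f - β ⬝ᵥ f ≤ tvDist α β := by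
  have h : α ⬝ᵥ f - β ⬝ᵥ f = ∑ x, (α x - β x) * (f x - 1 / 2) := by
    simp only [sub_mul, mul_sub, Finset.sum_sub_distrib, ← Finset.sum_mul, hα, hβ, dotProduct]
    ring
  rw [h, tvDist, Finset.sum_div]
  refine Finset.sum_le_sum fun x _ => ?_
  have h1 : |f x - 1 / 2| ≤ 1 / 2 := abs_le.2 ⟨by linarith [hf x], by linarith [hf x]⟩
  calc (α x - β x) * (f x - 1 / 2) ≤ |(α x - β x) * (f x - 1 / 2)| := le_abs_self _
    _ = |α x - β x| * |f x - 1 / 2| := abs_mul _ _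
    _ ≤ |α x - β x| * (1 / 2) := mul_le_mul_of_nonneg_left h1 (abs_nonneg _)
    _ = _ := by ring

lemma aux_tv_eq {α β : Ω → ℝ} (hα : ∑ x, α x = 1) (hβ : ∑ x, β x = 1) :
    ∃ f : Ω → ℝ, (∀ x, 0 ≤ f x ∧ f x ≤ 1) ∧ tvDist α β = α ⬝ᵥ f - β ⬝ᵥ f := by
  refine ⟨fun x => if β x ≤ α x then 1 else 0, fun x => by dsimp only; split_ifs <;> norm_num, ?_⟩
  set f : Ω → ℝ := fun x => if β x ≤ α x then 1 else 0 with hfd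
  have h : α ⬝ᵥ f - β ⬝ᵥ f = ∑ x, (α x - β x) * (f x - 1 / 2) := by
    simp only [sub_mul, mul_sub, Finset.sum_sub_distrib, ← Finset.sum_mul, hα, hβ, dotProduct]
    ring
  rw [h, tvDist, Finset.sum_div]
  refine Finset.sum_congr rfl fun x _ => ?_
  simp only [hfd]
  split_ifs with hx
  · rw [abs_of_nonneg (by linarith)]; ring
  · rw [abs_of_nonpos (by linarith)]; ring

lemma aux_lazy_stoch {P : Matrix Ω Ω ℝ} (hP : IsStochastic P) : IsStochastic (lazyM P) := by
  constructor
  · intro x y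
    have : 0 ≤ (1 : Matrix Ω Ω ℝ) x y := by rw [one_apply]; split_ifs <;> norm_num
    simp only [lazyM, Matrix.smul_apply, Matrix.add_apply, smul_eq_mul]
    have := hP.1 x y
    positivity
  · intro x
    simp only [lazyM, Matrix.smul_apply, Matrix.add_apply, smul_eq_mul, ← Finset.mul_sum,
      Finset.sum_add_distrib, hP.2 x, one_apply]
    simp; norm_num

lemma aux_lazy_pow (P : Matrix Ω Ω ℝ) (m : ℕ) :
    lazyM P ^ m = ∑ K ∈ Finset.range (m + 1), ((m.choose K : ℝ) / 2 ^ m) • P ^ K := by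
  rw [lazyM, smul_pow, add_comm 1 P, (Commute.one_right P).add_pow, Finset.smul_sum]
  refine Finset.sum_congr rfl fun K _ => ?_
  rw [one_pow, mul_one, ← nsmul_eq_mul', ← Nat.cast_smul_eq_nsmul ℝ, smul_smul]
  congr 1
  rw [inv_pow]; ring

end chain

lemma aux_mgf (m : ℕ) (l : ℝ) :
    ∑ K ∈ Finset.range (m + 1), ((m.choose K : ℝ) / 2 ^ m) * Real.exp (l * (2 * K - m)) =
      Real.cosh l ^ m := by
  rw [Real.cosh_eq, div_pow, add_pow, Finset.sum_div]
  refine Finset.sum_congr rfl fun K hK => ?_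
  have hK' : K ≤ m := by simpa [Nat.lt_succ_iff] using hK
  rw [← Real.exp_nat_mul, ← Real.exp_nat_mul, ← Real.exp_add, Nat.cast_sub hK']
  have : l * (2 * K - m) = K * l + (m - K) * -l := by ring
  rw [this]; ring

lemma aux_wsum (m : ℕ) : ∑ K ∈ Finset.range (m + 1), ((m.choose K : ℝ) / 2 ^ m) = 1 := by
  simpa using aux_mgf m 0

lemma aux_chernoff (m : ℕ) (t b : ℝ) (ht : 0 < t) (hb : 0 ≤ b) (hm : (m : ℝ) ≤ 2 * t) :
    ∑ K ∈ (Finset.range (m + 1)).filter (fun K : ℕ => ¬ |2 * (K : ℝ) - m| ≤ 2 * b), ((m.choose K : ℝ) / 2 ^ m) ≤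
      2 * Real.exp (-(b ^ 2 / t)) := by
  set l := b / t with hl
  have hl0 : 0 ≤ l := by positivity
  have hc : Real.cosh l ^ m ≤ Real.exp (t * l ^ 2) := by
    calc Real.cosh l ^ m ≤ Real.exp (l ^ 2 / 2) ^ m :=
          pow_le_pow_left₀ (Real.cosh_pos l).le (Real.cosh_le_exp_half_sq l) m
      _ = Real.exp (m * (l ^ 2 / 2)) := by rw [← Real.exp_nat_mul]
      _ ≤ _ := Real.exp_le_exp.2 (by nlinarith [sq_nonneg l])
  have h1 := aux_mgf m l
  have h2 := aux_mgf m (-l)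
  rw [Real.cosh_neg] at h2
  calc _ ≤ ∑ K ∈ Finset.range (m + 1), ((m.choose K : ℝ) / 2 ^ m) *
        (Real.exp (-(2 * l * b)) *
          (Real.exp (l * (2 * K - m)) + Real.exp (-l * (2 * K - m)))) := by
        rw [Finset.sum_filter]
        refine Finset.sum_le_sum fun K _ => ?_
        split_ifs with h
        · positivity
        · rw [not_le] at h
          apply le_mul_of_one_le_right (by positivity)
          rw [mul_add, ← Real.exp_add, ← Real.exp_add]
          rcases lt_abs.1 h with h | h
          · have : 1 ≤ Real.exp (-(2 * l * b) + l * (2 * K - m)) :=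
              Real.one_le_exp (by nlinarith)
            have := Real.exp_pos (-(2 * l * b) + -l * (2 * K - m))
            linarith
          · have : 1 ≤ Real.exp (-(2 * l * b) + -l * (2 * K - m)) :=
              Real.one_le_exp (by nlinarith)
            have := Real.exp_pos (-(2 * l * b) + l * (2 * K - m))
            linarith
    _ = Real.exp (-(2 * l * b)) * (2 * Real.cosh l ^ m) := by
        rw [two_mul (Real.cosh l ^ m)]
        nth_rewrite 1 [← h1]
        rw [← h2, ← Finset.sum_add_distrib, Finset.mul_sum]
        exact Finset.sum_congr rfl fun K _ => by ring
    _ ≤ Real.exp (-(2 * l * b)) * (2 * Real.exp (t * l ^ 2)) := by gcongr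
    _ = 2 * Real.exp (-(b ^ 2 / t)) := by
        rw [mul_left_comm, ← Real.exp_add]
        congr 2
        rw [hl]; field_simp; ring

lemma aux_telescope (F : ℕ → ℝ) (k0 k1 k : ℕ) (h0 : k0 ≤ k) (h1 : k ≤ k1) :
    F k ≤ F k0 + ∑ j ∈ Finset.Ico k0 k1, |F (j + 1) - F j| := by
  have h := Finset.sum_Ico_sub F h0
  have h2 : ∑ j ∈ Finset.Ico k0 k, (F (j + 1) - F j) ≤
      ∑ j ∈ Finset.Ico k0 k1, |F (j + 1) - F j| :=
    (Finset.sum_le_sum fun j _ => le_abs_self _).trans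
      (Finset.sum_le_sum_of_subset_of_nonneg (Finset.Ico_subset_Ico_right h1)
        fun _ _ _ => abs_nonneg _)
  linarith

lemma aux_main {Ω : Type} [Fintype Ω] [DecidableEq Ω]
    {P : Matrix Ω Ω ℝ} {pi : Ω → ℝ} (hP : IsStochastic P) (hpi : IsProbVec pi)
    (h : pi ᵥ* P = pi) (hr : IsReversible P pi) {μ : Ω → ℝ} (hμ : IsProbVec μ)
    (n m k0 k1 : ℕ) (S : Set ℕ) [DecidablePred (· ∈ S)]
    (hS : ∀ K ∈ S, K ≤ n ∧ k0 ≤ n - K ∧ n - K ≤ k1) :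
    tvDist (fun y => ((μ ᵥ* (P ^ n)) y + (μ ᵥ* (P ^ (n + 1))) y) / 2) pi ≤
      tvDist (μ ᵥ* (lazyM P ^ m)) pi + ((k1 - k0 : ℕ) : ℝ) * (1 / (k0 + 1)) +
      ∑ K ∈ Finset.range (m + 1) with ¬ K ∈ S, ((m.choose K : ℝ) / 2 ^ m) := by
  set w : ℕ → ℝ := fun K => (m.choose K : ℝ) / 2 ^ m with hw
  have hw0 : ∀ K, 0 ≤ w K := fun K => by simp only [hw]; positivity
  have hs1 : ∑ y, ((μ ᵥ* (P ^ n)) y + (μ ᵥ* (P ^ (n + 1))) y) / 2 = 1 := by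
    rw [← Finset.sum_div, Finset.sum_add_distrib, aux_vec_sum hP hμ.2, aux_vec_sum hP hμ.2]
    norm_num
  obtain ⟨f, hf, hfe⟩ := aux_tv_eq hs1 hpi.2
  set F : ℕ → Ω → ℝ := fun k x => ((P ^ k *ᵥ f) x + (P ^ (k + 1) *ᵥ f) x) / 2 with hF
  have hFb : ∀ k x, 0 ≤ F k x ∧ F k x ≤ 1 := fun k x => by
    have h1 := aux_bd_pow hP f hf k x
    have h2 := aux_bd_pow hP f hf (k + 1) x
    simp only [hF]
    constructor <;> linarith
  have hFe : ∀ k, F k = (2 : ℝ)⁻¹ • (P ^ k *ᵥ f + P ^ (k + 1) *ᵥ f) := fun k => by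
    ext x
    simp only [hF, Pi.smul_apply, Pi.add_apply, smul_eq_mul]; ring
  have hFp : ∀ j k, P ^ j *ᵥ F k = F (j + k) := fun j k => by
    rw [hFe, hFe, mulVec_smul, mulVec_add, mulVec_mulVec, mulVec_mulVec, ← pow_add, ← pow_add,
      add_assoc]
  have hpF : ∀ k, pi ⬝ᵥ F k = pi ⬝ᵥ f := fun k => by
    rw [hFe, dotProduct_smul, dotProduct_add, aux_stat_pow h, aux_stat_pow h, smul_eq_mul]; ring
  have hL : (fun y => ((μ ᵥ* (P ^ n)) y + (μ ᵥ* (P ^ (n + 1))) y) / 2) ⬝ᵥ f = μ ⬝ᵥ F n := by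
    rw [hFe, dotProduct_smul, dotProduct_add, dotProduct_mulVec, dotProduct_mulVec, smul_eq_mul]
    simp only [dotProduct, ← Finset.sum_add_distrib, Finset.mul_sum]
    exact Finset.sum_congr rfl fun x _ => by ring
  set D : Ω → ℝ := fun x => ∑ j ∈ Finset.Ico k0 k1, |F (j + 1) x - F j x| with hD
  set g : Ω → ℝ := fun x => min 1 (F k0 x + D x) with hg
  have hD0 : ∀ x, 0 ≤ D x := fun x => Finset.sum_nonneg fun _ _ => abs_nonneg _
  have hgb : ∀ x, 0 ≤ g x ∧ g x ≤ 1 := fun x =>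
    ⟨le_min zero_le_one (add_nonneg (hFb k0 x).1 (hD0 x)), min_le_left _ _⟩
  have hFg : ∀ k, k0 ≤ k → k ≤ k1 → ∀ x, F k x ≤ g x := fun k hk0 hk1 x =>
    le_min (hFb k x).2 (aux_telescope (fun j => F j x) k0 k1 k hk0 hk1)
  have hpD : pi ⬝ᵥ D ≤ ((k1 - k0 : ℕ) : ℝ) * (1 / (k0 + 1)) := by
    have e : pi ⬝ᵥ D = ∑ j ∈ Finset.Ico k0 k1, ∑ x, pi x * |F (j + 1) x - F j x| := by
      simp only [dotProduct, hD, Finset.mul_sum]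
      exact Finset.sum_comm
    rw [e, ← Nat.card_Ico, ← nsmul_eq_mul]
    refine Finset.sum_le_card_nsmul _ _ _ fun j hj => ?_
    have hj0 : k0 ≤ j := (Finset.mem_Ico.1 hj).1
    have h1 := aux_abs hP hpi h hr f hf j
    have e2 : ∑ x, pi x * |F (j + 1) x - F j x| =
        (∑ x, pi x * |(P ^ (j + 2) *ᵥ f) x - (P ^ j *ᵥ f) x|) / 2 := by
      rw [Finset.sum_div]
      refine Finset.sum_congr rfl fun x _ => ?_
      have : F (j + 1) x - F j x = ((P ^ (j + 2) *ᵥ f) x - (P ^ j *ᵥ f) x) / 2 := by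
        simp only [hF]; ring
      rw [this, abs_div, abs_two]; ring
    rw [e2]
    calc _ ≤ (2 / ((j : ℝ) + 1)) / 2 := by gcongr
      _ = 1 / ((j : ℝ) + 1) := by field_simp
      _ ≤ _ := by gcongr
  have hpg : pi ⬝ᵥ g ≤ pi ⬝ᵥ f + pi ⬝ᵥ D := by
    rw [← hpF k0, ← dotProduct_add]
    exact Finset.sum_le_sum fun x _ => mul_le_mul_of_nonneg_left (min_le_right _ _) (hpi.1 x)
  have hlz := aux_tv_le (aux_vec_sum (aux_lazy_stoch hP) hμ.2 m) hpi.2 hgb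
  have hlg : (μ ᵥ* lazyM P ^ m) ⬝ᵥ g = ∑ K ∈ Finset.range (m + 1), w K * (μ ⬝ᵥ (P ^ K *ᵥ g)) := by
    rw [← dotProduct_mulVec, aux_lazy_pow, sum_mulVec, dotProduct_sum]
    refine Finset.sum_congr rfl fun K _ => ?_
    rw [smul_mulVec, dotProduct_smul, smul_eq_mul]
  have hmain : μ ⬝ᵥ F n ≤ (μ ᵥ* lazyM P ^ m) ⬝ᵥ g +
      ∑ K ∈ Finset.range (m + 1) with ¬ K ∈ S, w K := by
    rw [hlg, Finset.sum_filter, ← Finset.sum_add_distrib]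
    have : μ ⬝ᵥ F n = ∑ K ∈ Finset.range (m + 1), w K * (μ ⬝ᵥ F n) := by
      rw [← Finset.sum_mul, aux_wsum, one_mul]
    rw [this]
    refine Finset.sum_le_sum fun K _ => ?_
    by_cases hK : K ∈ S
    · rw [if_neg (not_not.2 hK), add_zero]
      refine mul_le_mul_of_nonneg_left ?_ (hw0 K)
      obtain ⟨a1, a2, a3⟩ := hS K hK
      have : F n = P ^ K *ᵥ F (n - K) := by rw [hFp, Nat.add_sub_cancel' a1]
      rw [this]
      exact Finset.sum_le_sum fun x _ => mul_le_mul_of_nonneg_left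
        (aux_mono hP _ _ (hFg _ a2 a3) K x) (hμ.1 x)
    · rw [if_pos hK]
      have h1 := (aux_prob hμ (hFb n)).2
      have h2 := (aux_prob hμ (aux_bd_pow hP g hgb K)).1
      nlinarith [hw0 K, mul_nonneg (hw0 K) h2]
  rw [hfe, hL]
  linarith

/-- **Proposition 1.6 (eq. (9)) of Hermon–Peres.**
There is an absolute constant `C` such that for every finite irreducible reversible Markov
chain, every initial distribution `μ`, every `t ≥ 2` and every `2 ≤ s ≤ e^t`,
`d_ave(t + ⌈s√t⌉, μ) ≤ d_L(2t, μ) + C s⁻¹ √(log s)`. -/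
theorem ave_dist_le_lazy_dist_explicit :
    ∃ C : ℝ, 0 < C ∧
      ∀ (Ω : Type) [Fintype Ω] [DecidableEq Ω]
        (P : Matrix Ω Ω ℝ) (pi : Ω → ℝ), IsRevMC P pi →
        ∀ μ : Ω → ℝ, IsProbVec μ →
        ∀ t s : ℝ, 2 ≤ t → 2 ≤ s → s ≤ Real.exp t →
          aveDist P pi (t + ((⌈s * Real.sqrt t⌉ : ℤ) : ℝ)) μ ≤
            lazyDist P pi (2 * t) μ + C * s⁻¹ * Real.sqrt (Real.log s) := by
  refine ⟨20, by norm_num, ?_⟩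
  intro Ω _ _ P pi hM μ hμ t s ht hs _
  obtain ⟨⟨hP, -, hpi, hst⟩, hr⟩ := hM
  have ht0 : 0 < t := by linarith
  have hs0 : 0 < s := by linarith
  set r := Real.sqrt t with hrd
  have hr2 : r ^ 2 = t := Real.sq_sqrt ht0.le
  have hr0 : 0 < r := Real.sqrt_pos.2 ht0
  have hr14 : 1.4 ≤ r := Real.le_sqrt_of_sq_le (by norm_num; linarith)
  set q := Real.sqrt (Real.log s) with hqd
  have hlog : 1 / 4 ≤ Real.log s := by
    have := Real.log_le_log (by norm_num) hs
    linarith [Real.log_two_gt_d9]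
  have hq2 : q ^ 2 = Real.log s := Real.sq_sqrt (by linarith)
  have hq0 : 1 / 2 ≤ q := Real.le_sqrt_of_sq_le (by norm_num; linarith)
  have hqs : q ≤ s / 2 := by
    refine le_of_sq_le_sq ?_ (by linarith)
    rw [hq2]
    have h1 : Real.log s = Real.log 2 + Real.log (s / 2) := by
      rw [← Real.log_mul (by norm_num) (by positivity)]; congr 1; ring
    have h2 := Real.log_le_sub_one_of_pos (show 0 < s / 2 by positivity)
    nlinarith [Real.log_two_lt_d9, sq_nonneg (s - 1)]
  set b := r * q with hbd
  have hb0 : 0 ≤ b := by positivity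
  set n := ⌊t + ((⌈s * r⌉ : ℤ) : ℝ)⌋₊ with hn
  set m := ⌊2 * t⌋₊ with hm
  have hm1 : (m : ℝ) ≤ 2 * t := Nat.floor_le (by linarith)
  have hn1 : t + s * r - 1 ≤ n := by
    have h1 := Nat.lt_floor_add_one (t + ((⌈s * r⌉ : ℤ) : ℝ))
    have h2 := Int.le_ceil (s * r)
    linarith
  set a := (n : ℝ) - m / 2 with had
  have ha : s * r / 8 ≤ a - b := by
    have h1 : b ≤ r * (s / 2) := mul_le_mul_of_nonneg_left hqs hr0.le
    nlinarith
  have hsr : 0 < s * r := by positivity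
  set k0 := ⌈a - b⌉₊ with hk0
  set k1 := ⌊a + b⌋₊ with hk1
  classical
  have hmain := aux_main hP hpi hst hr hμ n m k0 k1 {K : ℕ | |2 * (K : ℝ) - m| ≤ 2 * b} (by
    intro K hK
    have hK' := abs_le.1 (show |2 * (K : ℝ) - m| ≤ 2 * b from hK)
    have hle : K ≤ n := by
      have : (K : ℝ) ≤ n := by linarith
      exact_mod_cast this
    refine ⟨hle, Nat.ceil_le.2 ?_, Nat.le_floor ?_⟩ <;> rw [Nat.cast_sub hle] <;> linarith)
  have hch := aux_chernoff m t b ht0 hb0 hm1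
  have hexp : Real.exp (-(b ^ 2 / t)) = s⁻¹ := by
    have : b ^ 2 / t = Real.log s := by
      rw [hbd, mul_pow, hr2, hq2]; field_simp
    rw [this, Real.exp_neg, Real.exp_log hs0]
  rw [hexp] at hch
  have hk : ((k1 - k0 : ℕ) : ℝ) ≤ 2 * b := by
    rcases le_total k0 k1 with hle | hle
    · rw [Nat.cast_sub hle]
      have h1 : a - b ≤ k0 := Nat.le_ceil _
      have h2 : (k1 : ℝ) ≤ a + b := Nat.floor_le (by linarith)
      linarith
    · rw [Nat.sub_eq_zero_of_le hle]; simpa using hb0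
  have hk2 : (1 : ℝ) / (k0 + 1) ≤ 8 / (s * r) := by
    rw [div_le_div_iff₀ (by positivity) hsr]
    have h1 : a - b ≤ k0 := Nat.le_ceil _
    linarith
  have hprod : ((k1 - k0 : ℕ) : ℝ) * (1 / (k0 + 1)) ≤ 16 * s⁻¹ * q := by
    calc _ ≤ 2 * b * (8 / (s * r)) := mul_le_mul hk hk2 (by positivity) (by positivity)
      _ = 16 * s⁻¹ * q := by rw [hbd]; field_simp; ring
  have h2s : 2 * s⁻¹ ≤ 4 * s⁻¹ * q := by
    have : 0 < s⁻¹ := by positivity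
    nlinarith
  simp only [Set.mem_ofPred_eq] at hmain
  have hch' : ∑ K ∈ (Finset.range (m + 1)).filter (fun K : ℕ => ¬ |2 * (K : ℝ) - m| ≤ 2 * b),
      ((m.choose K : ℝ) / 2 ^ m) ≤ 2 * s⁻¹ := by convert hch
  rw [aveDist, lazyDist]
  have hfin := hmain.trans (add_le_add (add_le_add le_rfl hprod) (le_trans (le_of_eq (by congr)) hch'))
  linarith
end
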